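/- arXiv:2210.02415 — 6 statements merged into one kernel-verified Lean document; each statement's English description precedes it below -/
import Mathlib

section
/- Let d ≥ 1 and k ≥ 1 be integers, Δ > 0, and let μ_1, …, μ_k ∈ ℝ^d be Δ-separated with ‖μ_1‖₂ ≤ ‖μ_2‖₂ ≤ ⋯ ≤ ‖μ_k‖₂. Let S₂ = ∑_{j=1}^k e^{−‖μ_j‖₂²/4}. Then: (1) if Δ² ≥ 100d then S₂ ≤ 2; (2) if Δ² < 100d then S₂ ≤ 1 + (267d/Δ²)·max{(32d/Δ²)^{d/2}, 1}; and (3) in all cases S₂ ≤ 10·min{ k, 1 + (32d/Δ²)^{d/2+1} }. -/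
/-!
All three bounds follow from the single estimate `S₂ ≤ 1 + (32 d / Δ²) ^ (d/2 + 1)`.

Every mean but the first has norm at least `Δ/2`, since `Δ ≤ ‖μ₁ - μⱼ‖ ≤ 2‖μⱼ‖`. The balls of
radius `Δ/2` around `μ₁, …, μⱼ` are disjoint and lie in the ball of radius
`‖μⱼ‖ + Δ/2 ≤ 2‖μⱼ‖`, so comparing volumes gives `j ≤ (4‖μⱼ‖/Δ)^d` for `j ≥ 2`
(`index_le_of_separated`).

The exponential decay is then traded for the polynomial decay of order `s = d/2 + 1`: the
elementary inequality `y (y/x)^x ≤ e^y` (`mul_div_rpow_le_exp`) with `x = d/2`, `y = ‖μⱼ‖²/4` yields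
`e^{-‖μⱼ‖²/4} ≤ (32 d / Δ²)^s (2/d) j^{-(1 + 2/d)}` (`exp_neg_le_of_index_le`), and with `a = 2/d`
the series `∑_{j ≥ 2} a j^{-(1+a)}` is at most `1`, by telescoping.
-/

/-- Packing bound: if the means indexed by a finite set are `Δ`-separated and of norm at most `R`,
with `Δ/2 ≤ R`, then there are at most `(4R/Δ)^d` of them, by comparing volumes of balls. -/
lemma card_le_of_separated {ι : Type*} (d : ℕ) (Δ R : ℝ) (hΔ : 0 < Δ)
    (μ : ι → EuclideanSpace ℝ (Fin d)) (s : Finset ι)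
    (hsep : ∀ i j, i ≠ j → Δ ≤ ‖μ i - μ j‖)
    (hR : ∀ i ∈ s, ‖μ i‖ ≤ R) (hΔR : Δ / 2 ≤ R) :
    (s.card : ℝ) ≤ (4 * R / Δ) ^ d := by
  have hdisj : Set.PairwiseDisjoint (s : Set ι) fun i => Metric.ball (μ i) (Δ / 2) := by
    intro i _ j _ hij
    apply Metric.ball_disjoint_ball
    rw [dist_eq_norm]
    linarith [hsep i j hij]
  have hsub : (⋃ i ∈ s, Metric.ball (μ i) (Δ / 2)) ⊆
      Metric.ball (0 : EuclideanSpace ℝ (Fin d)) (2 * R) := by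
    refine Set.iUnion₂_subset fun i hi => Metric.ball_subset_ball' ?_
    rw [dist_zero_right]
    linarith [hR i hi]
  have hvol := MeasureTheory.measure_mono (μ := MeasureTheory.volume) hsub
  rw [MeasureTheory.measure_biUnion_finset hdisj (fun _ _ => measurableSet_ball)] at hvol
  have hR0 : 0 < R := by linarith
  simp only [MeasureTheory.Measure.addHaar_ball_of_pos _ _ (half_pos hΔ),
    MeasureTheory.Measure.addHaar_ball_of_pos _ _ (show 0 < 2 * R by linarith),
    finrank_euclideanSpace_fin, Finset.sum_const, nsmul_eq_mul, ← mul_assoc] at hvol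
  have hball0 := (Metric.measure_ball_pos MeasureTheory.volume
    (0 : EuclideanSpace ℝ (Fin d)) one_pos).ne'
  have hballtop := (MeasureTheory.measure_ball_lt_top (μ := MeasureTheory.volume)
    (x := (0 : EuclideanSpace ℝ (Fin d))) (r := 1)).ne
  rw [ENNReal.mul_le_mul_iff_left hball0 hballtop, ← ENNReal.ofReal_natCast,
    ← ENNReal.ofReal_mul (by positivity), ENNReal.ofReal_le_ofReal_iff (by positivity)] at hvol
  have hquot : 4 * R / Δ = 2 * R / (Δ / 2) := by field_simp; ring
  rw [hquot, div_pow, le_div_iff₀ (by positivity)]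
  exact hvol

/-- In a `Δ`-separated family sorted by norm, the `j`-th mean with `j ≥ 2` (zero-based index
`i = j - 1 ≥ 1`) satisfies `j ≤ (4‖μ‖/Δ)^d`. -/
lemma index_le_of_separated (d n : ℕ) (Δ : ℝ) (hΔ : 0 < Δ)
    (μ : Fin (n + 1) → EuclideanSpace ℝ (Fin d))
    (hsep : ∀ i j, i ≠ j → Δ ≤ ‖μ i - μ j‖)
    (hmono : Monotone fun j => ‖μ j‖) (i : Fin n) :
    Δ / 2 ≤ ‖μ i.succ‖ ∧ ((i : ℕ) : ℝ) + 2 ≤ (4 * ‖μ i.succ‖ / Δ) ^ d := by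
  have hhalf : Δ / 2 ≤ ‖μ i.succ‖ := by
    have hsep0 := hsep 0 i.succ (Fin.succ_ne_zero i).symm
    have hle : ‖μ 0‖ ≤ ‖μ i.succ‖ := hmono (Fin.zero_le _)
    linarith [norm_sub_le (μ 0) (μ i.succ)]
  refine ⟨hhalf, ?_⟩
  have hcard := card_le_of_separated d Δ ‖μ i.succ‖ hΔ μ (Finset.Iic i.succ) hsep
    (fun j hj => hmono (Finset.mem_Iic.mp hj)) hhalf
  rw [Fin.card_Iic] at hcard
  refine le_trans (le_of_eq ?_) hcard
  push_cast [Fin.val_succ]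
  ring

/-- The left-hand side over the right-hand side is largest at `y = x + 1`, where the inequality
reduces to `(1 + 1/x)^x ≤ e` and `x + 1 ≤ e^x`. -/
lemma mul_div_rpow_le_exp (x y : ℝ) (hx : 0 < x) (hy : 0 < y) :
    y * (y / x) ^ x ≤ Real.exp y := by
  rw [← Real.log_le_iff_le_exp (by positivity), Real.log_mul hy.ne' (by positivity),
    Real.log_rpow (by positivity), Real.log_div hy.ne' hx.ne']
  have hx1 : 0 < x + 1 := by linarith
  have hymax := Real.log_le_sub_one_of_pos (div_pos hy hx1)
  have hratio := Real.log_le_sub_one_of_pos (div_pos hx1 hx)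
  have hlog := Real.log_le_sub_one_of_pos hx1
  rw [Real.log_div hy.ne' hx1.ne'] at hymax
  rw [Real.log_div hx1.ne' hx.ne'] at hratio
  have hymax' := mul_le_mul_of_nonneg_left hymax hx1.le
  have hratio' := mul_le_mul_of_nonneg_left hratio hx.le
  have e1 : (x + 1) * (y / (x + 1) - 1) = y - (x + 1) := by field_simp
  have e2 : x * ((x + 1) / x - 1) = 1 := by field_simp; ring
  rw [e1] at hymax'
  rw [e2] at hratio'
  nlinarith

lemma exp_neg_le_of_index_le (d : ℕ) (hd : 1 ≤ d) (Δ ρ j : ℝ) (hΔ : 0 < Δ) (hρ : 0 < ρ)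
    (hj : 0 < j) (h : j ≤ (4 * ρ / Δ) ^ d) :
    Real.exp (-ρ ^ 2 / 4) ≤
      (32 * d / Δ ^ 2) ^ ((d : ℝ) / 2 + 1) * (2 / d * j ^ (-(1 + 2 / (d : ℝ)))) := by
  have hd0 : (0 : ℝ) < d := by exact_mod_cast hd
  set s : ℝ := (d : ℝ) / 2 + 1 with hs
  have hs0 : 0 < s := by positivity
  set y : ℝ := ρ ^ 2 / 4 with hy
  have hy0 : 0 < y := by positivity
  have hjpow : j ^ (1 + 2 / (d : ℝ)) ≤ (32 * d / Δ ^ 2) ^ s * (y / (d / 2)) ^ s := by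
    calc j ^ (1 + 2 / (d : ℝ)) ≤ ((4 * ρ / Δ) ^ d) ^ (1 + 2 / (d : ℝ)) := by gcongr
      _ = ((4 * ρ / Δ) ^ 2) ^ s := by
        rw [← Real.rpow_natCast, ← Real.rpow_natCast, ← Real.rpow_mul (by positivity),
          ← Real.rpow_mul (by positivity)]
        congr 1
        rw [hs]
        field_simp
        push_cast
        ring
      _ = (32 * d / Δ ^ 2) ^ s * (y / (d / 2)) ^ s := by
        rw [← Real.mul_rpow (by positivity) (by positivity)]
        congr 1
        rw [hy]
        field_simp
        ring
  have hexp : (y / (d / 2)) ^ s ≤ 2 / d * Real.exp y := by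
    have hmain := mul_div_rpow_le_exp ((d : ℝ) / 2) y (by positivity) hy0
    rw [hs, Real.rpow_add (by positivity), Real.rpow_one]
    calc (y / (d / 2)) ^ ((d : ℝ) / 2) * (y / (d / 2))
        = 2 / d * (y * (y / (d / 2)) ^ ((d : ℝ) / 2)) := by field_simp
      _ ≤ 2 / d * Real.exp y := by gcongr
  have hA : 0 < (32 * d / Δ ^ 2) ^ s := by positivity
  have htotal : j ^ (1 + 2 / (d : ℝ)) ≤ (32 * d / Δ ^ 2) ^ s * (2 / d * Real.exp y) :=
    hjpow.trans (by gcongr)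
  rw [show -ρ ^ 2 / 4 = -y by rw [hy]; ring, Real.exp_neg, Real.rpow_neg hj.le,
    inv_le_iff_one_le_mul₀ (Real.exp_pos y)]
  have hJ : 0 < j ^ (1 + 2 / (d : ℝ)) := by positivity
  calc (1 : ℝ) ≤ (32 * d / Δ ^ 2) ^ s * (2 / d * Real.exp y) / j ^ (1 + 2 / (d : ℝ)) := by
        rwa [one_le_div hJ]
    _ = _ := by field_simp

/-- One step of the telescoping: the tangent line of the convex function `t ↦ t^{-a}` at
`t + 1` lies below its graph at `t`. -/
lemma mul_rpow_neg_le_sub (a t : ℝ) (ha : 0 < a) (ht : 0 < t) :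
    a * (t + 1) ^ (-(1 + a)) ≤ t ^ (-a) - (t + 1) ^ (-a) := by
  have ht1 : 0 < t + 1 := by linarith
  have hlog := Real.log_le_sub_one_of_pos (div_pos ht ht1)
  have hsub : t / (t + 1) - 1 = -(1 / (t + 1)) := by field_simp; ring
  have hbern : 1 + a / (t + 1) ≤ (t / (t + 1)) ^ (-a) := by
    rw [Real.rpow_def_of_pos (by positivity)]
    refine le_trans ?_ (Real.add_one_le_exp _)
    rw [hsub] at hlog
    have := mul_le_mul_of_nonneg_left hlog ha.le
    rw [div_eq_mul_one_div a]
    linarith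
  rw [Real.div_rpow ht.le ht1.le, le_div_iff₀ (by positivity)] at hbern
  have hsplit : (t + 1) ^ (-(1 + a)) = (t + 1) ^ (-a) / (t + 1) := by
    rw [show -(1 + a) = -a - 1 by ring, Real.rpow_sub_one ht1.ne']
  rw [hsplit]
  have : (1 + a / (t + 1)) * (t + 1) ^ (-a)
      = (t + 1) ^ (-a) + a * ((t + 1) ^ (-a) / (t + 1)) := by ring
  linarith

lemma sum_mul_rpow_neg_le_one (a : ℝ) (ha : 0 < a) (n : ℕ) :
    ∑ i : Fin n, a * (((i : ℕ) : ℝ) + 2) ^ (-(1 + a)) ≤ 1 := by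
  rw [Fin.sum_univ_eq_sum_range (fun i : ℕ => a * ((i : ℝ) + 2) ^ (-(1 + a)))]
  have hpartial : ∑ i ∈ Finset.range n, a * ((i : ℝ) + 2) ^ (-(1 + a))
      ≤ 1 - ((n : ℝ) + 1) ^ (-a) := by
    induction n with
    | zero => simp
    | succ m ih =>
      rw [Finset.sum_range_succ]
      have hstep := mul_rpow_neg_le_sub a ((m : ℝ) + 1) ha (by positivity)
      rw [show (m : ℝ) + 1 + 1 = m + 2 by ring] at hstep
      push_cast
      rw [show (m : ℝ) + 1 + 1 = m + 2 by ring]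
      linarith
  have : 0 ≤ ((n : ℝ) + 1) ^ (-a) := by positivity
  linarith

/-- The master estimate from which all parts of `S2_bound` are read off. -/
lemma sum_exp_le_one_add_rpow (d k : ℕ) (hd : 1 ≤ d) (hk : 1 ≤ k) (Δ : ℝ) (hΔ : 0 < Δ)
    (μ : Fin k → EuclideanSpace ℝ (Fin d))
    (hsep : ∀ i j, i ≠ j → Δ ≤ ‖μ i - μ j‖)
    (hmono : Monotone fun j : Fin k => ‖μ j‖) :
    ∑ j : Fin k, Real.exp (-‖μ j‖ ^ 2 / 4) ≤ 1 + (32 * d / Δ ^ 2) ^ ((d : ℝ) / 2 + 1) := by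
  obtain ⟨n, rfl⟩ : ∃ n, k = n + 1 := ⟨k - 1, by omega⟩
  have hd0 : (0 : ℝ) < d := by exact_mod_cast hd
  rw [Fin.sum_univ_succ]
  refine add_le_add ?_ ?_
  · rw [Real.exp_le_one_iff]
    have := sq_nonneg ‖μ 0‖
    linarith
  · calc ∑ i : Fin n, Real.exp (-‖μ i.succ‖ ^ 2 / 4)
        ≤ ∑ i : Fin n, (32 * d / Δ ^ 2) ^ ((d : ℝ) / 2 + 1) *
            (2 / d * (((i : ℕ) : ℝ) + 2) ^ (-(1 + 2 / (d : ℝ)))) := by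
          refine Finset.sum_le_sum fun i _ => ?_
          obtain ⟨hhalf, hindex⟩ := index_le_of_separated d n Δ hΔ μ hsep hmono i
          exact exp_neg_le_of_index_le d hd Δ _ _ hΔ (by linarith) (by positivity) hindex
      _ ≤ (32 * d / Δ ^ 2) ^ ((d : ℝ) / 2 + 1) * 1 := by
          rw [← Finset.mul_sum]
          exact mul_le_mul_of_nonneg_left
            (sum_mul_rpow_neg_le_one (2 / d) (by positivity) n) (by positivity)
      _ = _ := mul_one _

open Finset Real

/-- Claim "S2-bound": bounds on `S₂ = ∑_{j=1}^k e^{−‖μ_j‖²/4}` for Δ-separated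
means sorted by norm. -/
theorem S2_bound
    (d k : ℕ) (hd : 1 ≤ d) (hk : 1 ≤ k) (Δ : ℝ) (hΔ : 0 < Δ)
    (μ : Fin k → EuclideanSpace ℝ (Fin d))
    (hsep : ∀ i j, i ≠ j → Δ ≤ ‖μ i - μ j‖)
    (hmono : Monotone fun j : Fin k => ‖μ j‖) :
    ((100 * (d : ℝ) ≤ Δ ^ 2 → ∑ j : Fin k, Real.exp (-‖μ j‖ ^ 2 / 4) ≤ 2)
    ∧ (Δ ^ 2 < 100 * (d : ℝ) →
        ∑ j : Fin k, Real.exp (-‖μ j‖ ^ 2 / 4)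
          ≤ 1 + (267 * d / Δ ^ 2) * max ((32 * d / Δ ^ 2) ^ ((d : ℝ) / 2)) 1))
    ∧ ∑ j : Fin k, Real.exp (-‖μ j‖ ^ 2 / 4)
        ≤ 10 * min (k : ℝ) (1 + (32 * d / Δ ^ 2) ^ ((d : ℝ) / 2 + 1)) := by
  have hmain := sum_exp_le_one_add_rpow d k hd hk Δ hΔ μ hsep hmono
  have hd0 : (0 : ℝ) < d := by exact_mod_cast hd
  have hΔ2 : 0 < Δ ^ 2 := by positivity
  have hA : 0 ≤ (32 * d / Δ ^ 2) ^ ((d : ℝ) / 2 + 1) := by positivity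
  refine ⟨⟨fun h => ?_, fun _ => ?_⟩, ?_⟩
  · have : (32 * d / Δ ^ 2) ^ ((d : ℝ) / 2 + 1) ≤ 1 := by
      apply Real.rpow_le_one (by positivity) _ (by positivity)
      rw [div_le_one hΔ2]
      linarith
    linarith
  · refine hmain.trans (add_le_add le_rfl ?_)
    rw [Real.rpow_add (by positivity), Real.rpow_one, mul_comm]
    have hcoef : 32 * d / Δ ^ 2 ≤ 267 * d / Δ ^ 2 := by gcongr; norm_num
    exact mul_le_mul hcoef (le_max_left _ _) (by positivity) (by positivity)
  · rw [mul_min_of_nonneg _ _ (by norm_num : (0 : ℝ) ≤ 10)]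
    refine le_min ?_ (by linarith)
    have hcount : ∑ j : Fin k, Real.exp (-‖μ j‖ ^ 2 / 4) ≤ ∑ _j : Fin k, (1 : ℝ) := by
      refine Finset.sum_le_sum fun j _ => ?_
      rw [Real.exp_le_one_iff]
      have := sq_nonneg ‖μ j‖
      linarith
    rw [Finset.sum_const, Finset.card_univ, Fintype.card_fin, nsmul_one] at hcount
    have : (0 : ℝ) ≤ k := by positivity
    linarith
end

section
/- Let d ≥ 1 and k ≥ 2 be integers, Δ > 0, and suppose μ_1, μ_2, …, μ_k ∈ ℝ^d are Δ-separated and ‖μ_1‖₂ ≤ ‖μ_2‖₂ ≤ ⋯ ≤ ‖μ_k‖₂. Then for every j with 2 ≤ j ≤ k, ‖μ_j‖₂ ≥ max{ Δ/2, Δ·j^{1/d}/4 }. -/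
open Real

/-!
The bound is a volume-packing argument. Put `R = ‖μ j‖`. Since `‖μ 0‖ ≤ R` and `μ 0`, `μ j` are at
distance at least `Δ`, the triangle inequality gives `Δ / 2 ≤ R`. The `j + 1` open balls of radius
`Δ / 2` around `μ 0, …, μ j` are pairwise disjoint and contained in the ball of radius
`R + Δ / 2 ≤ 2 * R` around the origin. Comparing volumes (`card_mul_pow_le_of_separated`) yields
`(j + 1) * (Δ / 2) ^ d ≤ (2 * R) ^ d`, and taking `d`-th roots finishes the proof.
-/

open MeasureTheory Metric in
/-- Packing inequality: disjoint balls of radius `δ` contained in a ball of radius `ρ`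
number at most `(ρ / δ) ^ d`. -/
lemma card_mul_pow_le_of_separated {ι : Type*} {d : ℕ} (s : Finset ι)
    (c : ι → EuclideanSpace ℝ (Fin d)) {δ ρ : ℝ} (hδ : 0 < δ) (hρ : 0 < ρ)
    (hc : ∀ i ∈ s, ‖c i‖ + δ ≤ ρ)
    (hsep : ∀ i ∈ s, ∀ j ∈ s, i ≠ j → δ + δ ≤ ‖c i - c j‖) :
    (s.card : ℝ) * δ ^ d ≤ ρ ^ d := by
  have hdisj : Set.Pairwise (s : Set ι) (Function.onFun Disjoint fun i => ball (c i) δ) := by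
    intro i hi j hj hij
    apply ball_disjoint_ball
    rw [dist_eq_norm]
    exact hsep i hi j hj hij
  have hsub : (⋃ i ∈ s, ball (c i) δ) ⊆ ball (0 : EuclideanSpace ℝ (Fin d)) ρ := by
    refine Set.iUnion₂_subset fun i hi => ball_subset_ball' ?_
    rw [dist_zero_right]
    linarith [hc i hi]
  have hvol := measure_mono (μ := volume) hsub
  rw [measure_biUnion_finset hdisj fun _ _ => measurableSet_ball] at hvol
  simp only [Measure.addHaar_ball_of_pos _ _ hδ, Measure.addHaar_ball_of_pos _ _ hρ,
    Finset.sum_const, nsmul_eq_mul, finrank_euclideanSpace_fin, ← mul_assoc] at hvol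
  have hcancel := (ENNReal.mul_le_mul_iff_left
    (measure_ball_pos _ _ zero_lt_one).ne' measure_ball_lt_top.ne).1 hvol
  have hreal := ENNReal.toReal_le_of_le_ofReal (by positivity) hcancel
  rwa [ENNReal.toReal_mul, ENNReal.toReal_natCast, ENNReal.toReal_ofReal (by positivity)] at hreal

/-- Lemma "norm-lb": for Δ-separated points sorted by norm, the `j`-th point
(1-indexed, `j ≥ 2`) has norm at least `max(Δ/2, Δ j^{1/d}/4)`. -/
theorem norm_lower_bound_separated_sorted
    (d k : ℕ) (hd : 1 ≤ d) (hk : 2 ≤ k) (Δ : ℝ) (hΔ : 0 < Δ)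
    (μ : Fin k → EuclideanSpace ℝ (Fin d))
    (hsep : ∀ i j, i ≠ j → Δ ≤ ‖μ i - μ j‖)
    (hmono : Monotone fun j : Fin k => ‖μ j‖) :
    ∀ j : Fin k, 1 ≤ (j : ℕ) →
      max (Δ / 2) (Δ * (((j : ℕ) + 1 : ℝ)) ^ ((1 : ℝ) / d) / 4) ≤ ‖μ j‖ := by
  intro j hj
  have hhalf : Δ / 2 ≤ ‖μ j‖ := by
    let z : Fin k := ⟨0, by omega⟩
    have hzj : z ≠ j := by
      intro h
      have := congrArg Fin.val h
      simp only [z] at this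
      omega
    have hle : ‖μ z‖ ≤ ‖μ j‖ := hmono (Fin.mk_le_of_le_val (Nat.zero_le _))
    linarith [hsep z j hzj, norm_sub_le (μ z) (μ j)]
  refine max_le hhalf ?_
  have hpack : ((j : ℕ) + 1 : ℝ) * (Δ / 2) ^ d ≤ (2 * ‖μ j‖) ^ d := by
    have h := card_mul_pow_le_of_separated (Finset.Iic j) μ (half_pos hΔ)
      (ρ := 2 * ‖μ j‖) (by linarith)
      (fun i hi => by
        have : ‖μ i‖ ≤ ‖μ j‖ := hmono (Finset.mem_Iic.1 hi)
        linarith)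
      (fun i _ l _ hil => by linarith [hsep i l hil])
    simpa using h
  have hroot : ((((j : ℕ) + 1 : ℝ)) ^ ((1 : ℝ) / d)) ^ d = (j : ℕ) + 1 := by
    rw [one_div]
    exact Real.rpow_inv_natCast_pow (by positivity) (by omega)
  have hlin : (((j : ℕ) + 1 : ℝ)) ^ ((1 : ℝ) / d) * (Δ / 2) ≤ 2 * ‖μ j‖ := by
    refine le_of_pow_le_pow_left₀ (n := d) (by omega) (by positivity) ?_
    rwa [mul_pow, hroot]
  linarith
end

section
/- Let d, t, N ≥ 1 be integers and R > Δ > 0 be reals satisfying (e(t+d)/d)^d ≤ N ≤ (R/(3Δ))^d. Then there exist points μ^{(P)}_1, …, μ^{(P)}_N and μ^{(Q)}_1, …, μ^{(Q)}_N in the closed Euclidean ball of radius 2R centered at the origin in ℝ^d such that: (1) the family (μ^{(P)}_i)_{i=1}^N is Δ-separated and the family (μ^{(Q)}_i)_{i=1}^N is Δ-separated; (2) for every permutation π of {1, …, N} there exists i with ‖μ^{(P)}_i − μ^{(Q)}_{π(i)}‖₂ ≥ Δ; and (3) for every integer t' with 1 ≤ t' ≤ t and every ξ ∈ ℝ^d,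 ∑_{i=1}^N ⟨ξ, μ^{(P)}_i⟩^{t'} = ∑_{i=1}^N ⟨ξ, μ^{(Q)}_i⟩^{t'}. -/
open scoped RealInnerProductSpace

/-!
Choose `x₁, …, x_N` in the ball of radius `R` that are `3Δ`-separated (a volume argument,
`exists_separated`), fix a coordinate direction `u`, and look for `s ∈ [-1, 1]^N` such that the
points `x_k + Δ s_k u` and `x_k - Δ s_k u` have the same moments up to order `t`. Every point moves
by at most `Δ`, so all distances between points with different indices stay at least `Δ`; and if
some `|s_k| ≥ 1/2`, the two versions of the `k`-th point are at distance at least `Δ`. Hence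
both the separation and the matching condition follow from `1/2 ≤ max |s_k| ≤ 1`.

Each of the at most `(t+d choose d) < N` moment differences is an odd polynomial in `s`, so `s`
exists by a Borsuk–Ulam theorem for polynomials (`exists_zero_odd`): fewer than `N` odd polynomials
in `N` variables have a common zero with `1/2 ≤ max |s_k| ≤ 1`. It is proved algebraically.

* Let `o` be one variable and let the equations `p_i` be indexed by the others. For `c > 0`, perturb
  them to `g_i = X_i^D + c⁻¹ p_i` with `D` odd and larger than all degrees, and add
  `g_o = X_o^(2(K+2)) + ∑_{i ≠ o} X_i^(2K) - 1` with `K` odd and large; its zero set is compact and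
  close to the boundary of the cube.
* Since `g_i` is a pure power `X_i^(e_i)` plus terms of lower degree, the linear map `transfer`
  that replaces each `X_i^(e_i)` in a monomial by `g_i` is unipotent, hence bijective, and it
  identifies the quotient by `(g_i)` with the quotient by `(X_i^(e_i))`. It preserves parity, so the
  even polynomials modulo `(g_i)` form an algebra of dimension equal to the number of even monomials
  with all exponents below `e_i`. That number is `(K+2) D^(N-1)`, which is odd.
* A commutative real algebra of odd dimension has a homomorphism to `ℝ`
  (`exists_algHom_of_odd`), because commuting operators on an odd-dimensional real space have a
  common eigenvector.
* A homomorphism `φ` from the even polynomials to `ℝ` with some `φ(X_i²) > 0` is evaluation at a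
  real point (`exists_point_of_algHom`); positivity for some `i` is forced by `φ(g_o) = 0`.
* Let `c → 0` and use compactness.
-/

/-! ### Real algebras of odd dimension -/

theorem exists_root_of_monic_odd (q : Polynomial ℝ) (hm : q.Monic) (ho : Odd q.natDegree) :
    ∃ x, q.IsRoot x := by
  have hpos : 0 < q.degree := Polynomial.natDegree_pos_iff_degree_pos.mp ho.pos
  have h1 := q.tendsto_atTop_of_leadingCoeff_nonneg hpos (by rw [hm.leadingCoeff]; norm_num)
  have hnd : (-(q.comp (-Polynomial.X))).natDegree = q.natDegree := by
    simp [Polynomial.natDegree_comp]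
  have h2 := (-(q.comp (-Polynomial.X))).tendsto_atTop_of_leadingCoeff_nonneg
    (Polynomial.natDegree_pos_iff_degree_pos.mp (by rw [hnd]; exact ho.pos))
    (by rw [Polynomial.leadingCoeff_neg, Polynomial.leadingCoeff_comp (by simp)]
        simp [hm.leadingCoeff, ho.neg_one_pow])
  obtain ⟨a, ha⟩ := (h1.eventually (Filter.eventually_ge_atTop 0)).exists
  obtain ⟨b, hb⟩ := (h2.eventually (Filter.eventually_ge_atTop 0)).exists
  have hb' : q.eval (-b) ≤ 0 := by simpa using hb
  exact mem_range_of_exists_le_of_exists_ge q.continuous ⟨-b, hb'⟩ ⟨a, ha⟩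

/-- Commuting operators on an odd-dimensional real space have a common eigenvector: if some operator
is not scalar, it has a real eigenvalue `c`, and the kernel and the range of its difference with `c`
are proper nonzero submodules, one of which has odd dimension. -/
theorem exists_joint_eigenvector {A : Type*} [CommRing A] [Algebra ℝ A] (n : ℕ) :
    ∀ (V : Type*) [AddCommGroup V] [Module ℝ V] [Module A V] [IsScalarTower ℝ A V]
      [FiniteDimensional ℝ V], Module.finrank ℝ V = n → Odd n →
      ∃ v : V, v ≠ 0 ∧ ∀ a : A, ∃ c : ℝ, a • v = c • v := by
  induction n using Nat.strong_induction_on with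
  | _ n ih =>
  intro V _ _ _ _ _ hn ho
  have hnt : Nontrivial V := Module.finrank_pos_iff.mp (by rw [hn]; exact ho.pos)
  by_cases hs : ∀ a : A, ∃ c : ℝ, ∀ v : V, a • v = c • v
  · obtain ⟨v, hv⟩ := exists_ne (0 : V)
    exact ⟨v, hv, fun a => (hs a).imp fun c hc => hc v⟩
  push Not at hs
  obtain ⟨a, ha⟩ := hs
  let T : V →ₗ[ℝ] V := (LinearMap.lsmul A V a).restrictScalars ℝ
  obtain ⟨c, hc⟩ := exists_root_of_monic_odd T.charpoly T.charpoly_monic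
    (by rw [LinearMap.charpoly_natDegree, hn]; exact ho)
  have hev := (Module.End.hasEigenvalue_iff_isRoot_charpoly T c).mpr hc
  obtain ⟨w, hw⟩ := hev.exists_hasEigenvector
  let S : V →ₗ[A] V := LinearMap.lsmul A V (a - algebraMap ℝ A c)
  have hS : ∀ v, S v = a • v - c • v := fun v => by
    simp [S]
  have hrn := LinearMap.finrank_range_add_finrank_ker (S.restrictScalars ℝ)
  have e1 : Module.finrank ℝ (LinearMap.range (S.restrictScalars ℝ)) =
    Module.finrank ℝ (LinearMap.range S) := rfl
  have e2 : Module.finrank ℝ (LinearMap.ker (S.restrictScalars ℝ)) =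
    Module.finrank ℝ (LinearMap.ker S) := rfl
  rw [e1, e2, hn] at hrn
  have : FiniteDimensional ℝ (LinearMap.range S) :=
    inferInstanceAs (FiniteDimensional ℝ (LinearMap.range (S.restrictScalars ℝ)))
  have : FiniteDimensional ℝ (LinearMap.ker S) :=
    inferInstanceAs (FiniteDimensional ℝ (LinearMap.ker (S.restrictScalars ℝ)))
  have hk : 0 < Module.finrank ℝ (LinearMap.ker S) := by
    have : Nontrivial (LinearMap.ker S) := by
      refine ⟨⟨⟨w, ?_⟩, 0, ?_⟩⟩
      · rw [LinearMap.mem_ker, hS, sub_eq_zero]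
        exact hw.apply_eq_smul
      · intro h
        exact hw.2 (congrArg Subtype.val h)
    exact Module.finrank_pos
  have hr : 0 < Module.finrank ℝ (LinearMap.range S) := by
    obtain ⟨v, hv⟩ := ha c
    have : Nontrivial (LinearMap.range S) := by
      refine ⟨⟨⟨S v, v, rfl⟩, 0, ?_⟩⟩
      intro h
      have h' : S v = 0 := congrArg Subtype.val h
      rw [hS, sub_eq_zero] at h'
      exact hv h'
    exact Module.finrank_pos
  have key : ∀ W : Submodule A V, FiniteDimensional ℝ W → Module.finrank ℝ W < n →
      Odd (Module.finrank ℝ W) → ∃ v : V, v ≠ 0 ∧ ∀ a : A, ∃ c : ℝ, a • v = c • v := by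
    intro W _ hlt hodd
    obtain ⟨v, hv, h⟩ := ih _ hlt W rfl hodd
    refine ⟨v, by simpa using hv, fun b => (h b).imp fun c hc => ?_⟩
    exact congrArg Subtype.val hc
  rcases Nat.even_or_odd (Module.finrank ℝ (LinearMap.ker S)) with h | h
  · refine key (LinearMap.range S) inferInstance (by omega) ?_
    rw [← hrn, Nat.odd_add] at ho
    exact ho.mpr h
  · exact key (LinearMap.ker S) inferInstance (by omega) h

/-- The homomorphism is the system of eigenvalues on a joint eigenvector in `A ⧸ J`. -/
theorem exists_algHom_of_odd {A : Type*} [CommRing A] [Algebra ℝ A] (J : Ideal A)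
    (ho : Odd (Module.finrank ℝ (A ⧸ J))) :
    ∃ φ : A →ₐ[ℝ] ℝ, ∀ a ∈ J, φ a = 0 := by
  have : FiniteDimensional ℝ (A ⧸ J) := FiniteDimensional.of_finrank_pos ho.pos
  obtain ⟨v, hv, h⟩ := exists_joint_eigenvector (A := A) _ (A ⧸ J) rfl ho
  choose f hf using h
  have inj : ∀ {x y : ℝ}, x • v = y • v → x = y := fun h => smul_left_injective ℝ hv h
  refine ⟨AlgHom.ofLinearMap ⟨⟨f, ?_⟩, ?_⟩ ?_ ?_, ?_⟩
  · intro x y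
    apply inj
    rw [← hf, add_smul, add_smul, hf, hf]
  · intro r x
    apply inj
    rw [← hf, smul_assoc, hf]
    simp [smul_smul]
  · apply inj
    change f 1 • v = _
    rw [← hf]; simp
  · intro x y
    apply inj
    change f (x * y) • v = (f x * f y) • v
    rw [← hf, mul_smul, hf y, mul_smul, smul_comm x, hf x, smul_comm]
  · intro a ha
    apply inj
    change f a • v = _
    rw [← hf]
    obtain ⟨u, rfl⟩ := Ideal.Quotient.mk_surjective v
    rw [zero_smul]
    change Ideal.Quotient.mk J (a * u) = 0
    exact Ideal.Quotient.eq_zero_iff_mem.mpr (J.mul_mem_right _ ha)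

open MvPolynomial

/-! ### Reduction modulo polynomials with pure-power leading terms -/

section Reduction

variable {σ : Type*}

/-- The substitution `f(X) ↦ f(-X)`. -/
noncomputable def negVars : MvPolynomial σ ℝ →ₐ[ℝ] MvPolynomial σ ℝ := aeval fun i => -X i

theorem negVars_monomial (m : σ →₀ ℕ) (c : ℝ) :
    negVars (monomial m c) = (-1 : ℝ) ^ m.degree • monomial m c := by
  induction m using Finsupp.induction_linear generalizing c with
  | zero => simp [negVars]
  | add f g hf hg =>
    have : monomial (f + g) c = monomial f 1 * monomial g c := by simp
    rw [this, map_mul, hf, hg, map_add, pow_add, smul_mul_smul_comm]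
  | single i n =>
    have : monomial (Finsupp.single i n) c = C c * X i ^ n := by
      rw [C_mul_X_pow_eq_monomial]
    rw [this]
    simp only [negVars, map_mul, map_pow, aeval_X, algHom_C, Finsupp.degree_single, neg_pow (X i : MvPolynomial σ ℝ) n,
      smul_eq_C_mul, map_neg, map_one, algebraMap_eq]
    ring

theorem coeff_negVars (m : σ →₀ ℕ) (f : MvPolynomial σ ℝ) :
    coeff m (negVars f) = (-1 : ℝ) ^ m.degree * coeff m f := by
  classical
  induction f using MvPolynomial.induction_on' with
  | monomial u a =>
    rw [negVars_monomial, coeff_smul, coeff_monomial, smul_eq_mul]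
    split_ifs with h <;> simp [h]
  | add p q hp hq => simp [hp, hq, mul_add]

/-- The polynomials all of whose monomials have total degree less than `k`. -/
noncomputable def degLT (σ : Type*) (k : ℕ) : Submodule ℝ (MvPolynomial σ ℝ) :=
  restrictSupport ℝ {m | m.degree < k}

theorem mem_degLT {k : ℕ} {f : MvPolynomial σ ℝ} :
    f ∈ degLT σ k ↔ ∀ m, coeff m f ≠ 0 → m.degree < k := by
  rw [degLT, mem_restrictSupport_iff]
  simp [Set.subset_def]

theorem degLT_mono {k l : ℕ} (h : k ≤ l) : degLT σ k ≤ degLT σ l :=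
  restrictSupport_mono ℝ fun _ hm => lt_of_lt_of_le hm h

theorem mul_mem_degLT {k l : ℕ} {f g : MvPolynomial σ ℝ} (hf : f ∈ degLT σ k)
    (hg : g ∈ degLT σ (l + 1)) : f * g ∈ degLT σ (k + l) := by
  classical
  rw [mem_degLT] at *
  intro m hm
  rw [coeff_mul] at hm
  obtain ⟨x, hx, hne⟩ := Finset.exists_ne_zero_of_sum_ne_zero hm
  rw [Finset.HasAntidiagonal.mem_antidiagonal] at hx
  have h1 := hf x.1 (left_ne_zero_of_mul hne)
  have h2 := hg x.2 (right_ne_zero_of_mul hne)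
  rw [← hx, map_add]
  omega

/-- `f` is the monomial with exponent `m` plus terms of strictly smaller total degree. -/
def HasLead (f : MvPolynomial σ ℝ) (m : σ →₀ ℕ) : Prop :=
  f - monomial m 1 ∈ degLT σ m.degree

theorem HasLead.monomial (m : σ →₀ ℕ) : HasLead (monomial m 1) m := by
  simp [HasLead]

theorem HasLead.mul {f g : MvPolynomial σ ℝ} {a b : σ →₀ ℕ} (hf : HasLead f a)
    (hg : HasLead g b) : HasLead (f * g) (a + b) := by
  have hm : ∀ c : σ →₀ ℕ, MvPolynomial.monomial c (1 : ℝ) ∈ degLT σ (c.degree + 1) := fun c => by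
    simp [degLT]
  have hf' : f ∈ degLT σ (a.degree + 1) := by
    have := add_mem (degLT_mono (Nat.le_succ _) hf) (hm a)
    simpa using this
  have e : f * g - MvPolynomial.monomial (a + b) 1 =
      (g - MvPolynomial.monomial b 1) * f
        + (f - MvPolynomial.monomial a 1) * MvPolynomial.monomial b 1 := by
    rw [show MvPolynomial.monomial (a + b) (1 : ℝ)
      = MvPolynomial.monomial a 1 * MvPolynomial.monomial b 1 by simp]
    ring
  rw [HasLead, e, map_add]
  refine add_mem ?_ (mul_mem_degLT hf (hm b))
  rw [add_comm]
  exact mul_mem_degLT hg hf'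

theorem HasLead.pow {f : MvPolynomial σ ℝ} {a : σ →₀ ℕ} (hf : HasLead f a) (n : ℕ) :
    HasLead (f ^ n) (n • a) := by
  induction n with
  | zero => simpa using HasLead.monomial (0 : σ →₀ ℕ)
  | succ n ih => rw [pow_succ, succ_nsmul]; exact ih.mul hf

theorem HasLead.prod {ι : Type*} (s : Finset ι) {f : ι → MvPolynomial σ ℝ} {a : ι → σ →₀ ℕ}
    (hf : ∀ i ∈ s, HasLead (f i) (a i)) : HasLead (∏ i ∈ s, f i) (∑ i ∈ s, a i) := by
  classical
  induction s using Finset.induction_on with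
  | empty => simpa using HasLead.monomial (0 : σ →₀ ℕ)
  | insert i s hi ih =>
    rw [Finset.prod_insert hi, Finset.sum_insert hi]
    exact (hf i (by simp)).mul (ih fun j hj => hf j (by simp [hj]))

/-- The algebra of even polynomials, `f(-X) = f(X)`. -/
noncomputable def evenPart (σ : Type*) : Subalgebra ℝ (MvPolynomial σ ℝ) :=
  AlgHom.equalizer negVars (AlgHom.id ℝ _)

theorem mem_evenPart {f : MvPolynomial σ ℝ} : f ∈ evenPart σ ↔ negVars f = f := Iff.rfl

variable [Fintype σ]

/-- The monomial with exponent `m` in which each full power `X i ^ e i` is replaced by `g i`. -/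
noncomputable def standard (g : σ → MvPolynomial σ ℝ) (e : σ → ℕ) (m : σ →₀ ℕ) : MvPolynomial σ ℝ :=
  ∏ i, (g i ^ (m i / e i) * X i ^ (m i % e i))

theorem standard_hasLead {g : σ → MvPolynomial σ ℝ} {e : σ → ℕ}
    (hg : ∀ i, HasLead (g i) (Finsupp.single i (e i))) (m : σ →₀ ℕ) :
    HasLead (standard g e m) m := by
  classical
  have key : HasLead (standard g e m) (∑ i, Finsupp.single i (m i)) := by
    refine HasLead.prod _ fun i _ => ?_
    have h1 := (hg i).pow (m i / e i)
    have h2 : HasLead (X i ^ (m i % e i)) (Finsupp.single i (m i % e i)) := by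
      rw [X_pow_eq_monomial]; exact HasLead.monomial _
    have h3 := h1.mul h2
    rwa [Finsupp.smul_single, ← Finsupp.single_add, smul_eq_mul, mul_comm (m i / e i),
      Nat.div_add_mod] at h3
  rwa [Finsupp.univ_sum_single] at key

theorem standard_add_single [DecidableEq σ] (g : σ → MvPolynomial σ ℝ) {e : σ → ℕ}
    (he : ∀ i, 0 < e i)
    (m : σ →₀ ℕ) (j : σ) :
    standard g e (m + Finsupp.single j (e j)) = g j * standard g e m := by
  unfold standard
  rw [← Finset.mul_prod_erase _ _ (Finset.mem_univ j),
    ← Finset.mul_prod_erase _ (fun i => g i ^ (m i / e i) * X i ^ (m i % e i))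
      (Finset.mem_univ j)]
  have h : ∀ i ∈ Finset.univ.erase j, (m + Finsupp.single j (e j)) i = m i := fun i hi => by
    simp [(Finset.ne_of_mem_erase hi).symm]
  rw [Finset.prod_congr rfl fun i hi => by rw [h i hi]]
  simp only [Finsupp.add_apply, Finsupp.single_eq_same, Nat.add_div_right _ (he j),
    Nat.add_mod_right, pow_succ]
  ring

theorem negVars_standard {g : σ → MvPolynomial σ ℝ} {e : σ → ℕ}
    (hp : ∀ i, negVars (g i) = (-1 : ℝ) ^ e i • g i) (m : σ →₀ ℕ) :
    negVars (standard g e m) = (-1 : ℝ) ^ m.degree • standard g e m := by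
  unfold standard
  rw [map_prod, Finsupp.degree_eq_sum, ← Finset.prod_pow_eq_pow_sum, ← Finset.prod_smul]
  refine Finset.prod_congr rfl fun i _ => ?_
  have hX : negVars (X i : MvPolynomial σ ℝ) = (-1 : ℝ) • X i := by simp [negVars]
  rw [map_mul, map_pow, map_pow, hp, hX, smul_pow, smul_pow, smul_mul_smul_comm, ← pow_mul,
    ← pow_add, Nat.div_add_mod]

/-- The linear map sending each monomial to its `standard` counterpart. -/
noncomputable def transfer (g : σ → MvPolynomial σ ℝ) (e : σ → ℕ) :
    MvPolynomial σ ℝ →ₗ[ℝ] MvPolynomial σ ℝ :=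
  (basisMonomials σ ℝ).constr ℝ (standard g e)

theorem transfer_monomial (g : σ → MvPolynomial σ ℝ) (e : σ → ℕ) (m : σ →₀ ℕ) (c : ℝ) :
    transfer g e (monomial m c) = c • standard g e m := by
  have := (basisMonomials σ ℝ).constr_basis ℝ (standard g e) m
  rw [coe_basisMonomials] at this
  rw [show monomial m c = c • monomial m (1 : ℝ) by simp [smul_monomial], map_smul]
  congr 1

/-- `transfer` is the identity up to terms of lower degree, which makes it bijective. -/
theorem transfer_sub_mem {g : σ → MvPolynomial σ ℝ} {e : σ → ℕ}
    (hg : ∀ i, HasLead (g i) (Finsupp.single i (e i))) {k : ℕ} {f : MvPolynomial σ ℝ}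
    (hf : f ∈ degLT σ (k + 1)) : transfer g e f - f ∈ degLT σ k := by
  have e1 : transfer g e f - f =
      ∑ m ∈ f.support, coeff m f • (standard g e m - monomial m 1) := by
    conv_lhs => rw [f.as_sum]
    rw [map_sum, ← Finset.sum_sub_distrib]
    refine Finset.sum_congr rfl fun m _ => ?_
    rw [transfer_monomial, smul_sub, smul_monomial, smul_eq_mul, mul_one]
  rw [e1]
  refine sum_mem fun m hm => Submodule.smul_mem _ _ ?_
  have := mem_degLT.mp hf m (mem_support_iff.mp hm)
  exact degLT_mono (by omega) (standard_hasLead hg m)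

theorem mem_degLT_of_all (f : MvPolynomial σ ℝ) : ∃ k, f ∈ degLT σ k := by
  refine ⟨f.totalDegree + 1, mem_degLT.mpr fun m hm => ?_⟩
  have := le_totalDegree (mem_support_iff.mpr hm)
  rw [Finsupp.degree_eq_sum]
  rw [Finsupp.sum_fintype _ _ (by simp)] at this
  omega

theorem transfer_bijective {g : σ → MvPolynomial σ ℝ} {e : σ → ℕ}
    (hg : ∀ i, HasLead (g i) (Finsupp.single i (e i))) :
    Function.Bijective (transfer g e) := by
  have hz : ∀ f ∈ degLT σ 0, f = 0 := fun f hf => by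
    ext m
    by_contra h
    exact absurd (mem_degLT.mp hf m h) (by omega)
  constructor
  · rw [← LinearMap.ker_eq_bot, LinearMap.ker_eq_bot']
    intro f hf
    obtain ⟨k, hk⟩ := mem_degLT_of_all f
    induction k with
    | zero => exact hz f hk
    | succ k ih =>
      have := transfer_sub_mem hg hk
      rw [hf, zero_sub] at this
      exact ih (by simpa using neg_mem this)
  · intro f
    obtain ⟨k, hk⟩ := mem_degLT_of_all f
    induction k generalizing f with
    | zero => exact ⟨0, by rw [hz f hk, map_zero]⟩
    | succ k ih =>
      obtain ⟨h, hh⟩ := ih _ (transfer_sub_mem hg hk)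
      exact ⟨f - h, by rw [map_sub, hh]; abel⟩

theorem negVars_transfer {g : σ → MvPolynomial σ ℝ} {e : σ → ℕ}
    (hp : ∀ i, negVars (g i) = (-1 : ℝ) ^ e i • g i) (f : MvPolynomial σ ℝ) :
    negVars (transfer g e f) = transfer g e (negVars f) := by
  induction f using MvPolynomial.induction_on' with
  | monomial u a =>
    rw [transfer_monomial, negVars_monomial, map_smul, map_smul, negVars_standard hp,
      transfer_monomial, smul_comm]
  | add p q hp hq => simp [hp, hq]

theorem transfer_mul_pow {g : σ → MvPolynomial σ ℝ} {e : σ → ℕ} (he : ∀ i, 0 < e i) (j : σ)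
    (f : MvPolynomial σ ℝ) : transfer g e (X j ^ e j * f) = g j * transfer g e f := by
  classical
  induction f using MvPolynomial.induction_on' with
  | monomial u a =>
    rw [X_pow_eq_monomial, monomial_mul, one_mul, add_comm, transfer_monomial, transfer_monomial,
      standard_add_single g he, mul_smul_comm]
  | add p q hp hq => simp [mul_add, hp, hq]

/-- The monomial with exponent `m` is divisible by none of the powers `X i ^ e i`. -/
def IsNormal (e : σ → ℕ) (m : σ →₀ ℕ) : Prop := ∀ i, m i < e i

/-- The image under `transfer` of the span of the non-normal monomials, that is, of the ideal
generated by the `X i ^ e i`. It is the ideal generated by the `g i`, see `mul_mem_relations` and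
`gen_mem_relations`. -/
noncomputable def relations (g : σ → MvPolynomial σ ℝ) (e : σ → ℕ) : Submodule ℝ (MvPolynomial σ ℝ) :=
  (restrictSupport ℝ {m | ¬ IsNormal e m}).map (transfer g e)

/-- For a non-normal monomial `X j ^ e j * n`, the product `f * transfer (X j ^ e j * n)` equals
`g j * (f * transfer n)`. By surjectivity `f * transfer n = transfer h`, so the product is
`transfer (X j ^ e j * h)`. -/
theorem mul_mem_relations {g : σ → MvPolynomial σ ℝ} {e : σ → ℕ} (he : ∀ i, 0 < e i)
    (hg : ∀ i, HasLead (g i) (Finsupp.single i (e i))) {r : MvPolynomial σ ℝ}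
    (hr : r ∈ relations g e) (f : MvPolynomial σ ℝ) : f * r ∈ relations g e := by
  classical
  obtain ⟨q, hq, rfl⟩ := hr
  change q ∈ restrictSupport _ _ at hq
  rw [restrictSupport_eq_span] at hq
  induction hq using Submodule.span_induction with
  | zero => simp
  | add x y _ _ hx hy => rw [map_add, mul_add]; exact add_mem hx hy
  | smul c x _ hx => rw [map_smul, mul_smul_comm]; exact Submodule.smul_mem _ _ hx
  | mem x hx =>
    obtain ⟨m, hm, rfl⟩ := hx
    simp only [IsNormal, Set.mem_ofPred_eq, not_forall, not_lt] at hm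
    obtain ⟨j, hj⟩ := hm
    have hle : Finsupp.single j (e j) ≤ m := by simpa using hj
    have h1 : monomial m (1 : ℝ) = X j ^ e j * monomial (m - Finsupp.single j (e j)) 1 := by
      rw [X_pow_eq_monomial, monomial_mul, one_mul, add_tsub_cancel_of_le hle]
    obtain ⟨h, hh⟩ := (transfer_bijective hg).2
      (f * transfer g e (monomial (m - Finsupp.single j (e j)) 1))
    simp only [h1]
    rw [transfer_mul_pow he, mul_left_comm, ← hh, ← transfer_mul_pow he]
    refine Submodule.mem_map_of_mem ?_
    rw [mem_restrictSupport_iff]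
    intro n hn
    rw [Finset.mem_coe, mem_support_iff, X_pow_eq_monomial, coeff_monomial_mul'] at hn
    intro hN
    have := hN j
    split_ifs at hn with hc
    · have := hc j
      simp at this
      omega
    · exact hn rfl

theorem gen_mem_relations {g : σ → MvPolynomial σ ℝ} {e : σ → ℕ} (he : ∀ i, 0 < e i) (j : σ) :
    g j ∈ relations g e := by
  classical
  refine ⟨monomial (Finsupp.single j (e j)) 1, ?_, ?_⟩
  · change _ ∈ restrictSupport _ _
    rw [monomial_mem_restrictSupport]
    left
    intro h
    simpa using h j
  · rw [transfer_monomial, one_smul, ← zero_add (Finsupp.single j (e j)),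
      standard_add_single g he]
    simp [standard]

/-- The exponents of the normal monomials of even degree; they index a basis of the even polynomials
modulo the `g i`. -/
def EvenNormal (e : σ → ℕ) : Type _ := {a : (i : σ) → Fin (e i) // Even (∑ i, (a i : ℕ))}

noncomputable instance (e : σ → ℕ) : Fintype (EvenNormal e) := by
  classical
  unfold EvenNormal; infer_instance

/-- The exponent vector as a finitely supported function. -/
noncomputable def EvenNormal.exponent {e : σ → ℕ} (a : EvenNormal e) : σ →₀ ℕ :=
  Finsupp.equivFunOnFinite.symm fun i => (a.1 i : ℕ)

theorem EvenNormal.exponent_injective {e : σ → ℕ} :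
    Function.Injective (EvenNormal.exponent (e := e)) := by
  intro a b h
  apply Subtype.ext
  funext i
  apply Fin.ext
  exact DFunLike.congr_fun h i

/-- The quotient of the even polynomials by `relations` has dimension `card (EvenNormal e)`; if that
number is odd, some homomorphism to `ℝ` kills every even multiple of every `g i`. -/
theorem exists_algHom_evenPart {g : σ → MvPolynomial σ ℝ} {e : σ → ℕ} (he : ∀ i, 0 < e i)
    (hg : ∀ i, HasLead (g i) (Finsupp.single i (e i)))
    (hp : ∀ i, negVars (g i) = (-1 : ℝ) ^ e i • g i)
    (ho : Odd (Fintype.card (EvenNormal e))) :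
    ∃ φ : evenPart σ →ₐ[ℝ] ℝ, ∀ (f : evenPart σ) (h : MvPolynomial σ ℝ) (i : σ),
      (f : MvPolynomial σ ℝ) = h * g i → φ f = 0 := by
  classical
  let L := LinearEquiv.ofBijective (transfer g e) (transfer_bijective hg)
  have hLs : ∀ f, negVars (L.symm f) = L.symm (negVars f) := fun f => by
    apply L.injective
    change transfer g e (negVars (L.symm f)) = L (L.symm (negVars f))
    rw [← negVars_transfer hp, L.apply_symm_apply]
    congr 1
    exact L.apply_symm_apply f
  -- The coordinates of the class of `f` in the basis of even normal monomials.
  let Ψ : evenPart σ →ₗ[ℝ] (EvenNormal e → ℝ) :=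
    LinearMap.pi fun a => (lcoeff ℝ a.exponent) ∘ₗ L.symm.toLinearMap ∘ₗ
      (evenPart σ).val.toLinearMap
  have hΨ : ∀ f a, Ψ f a = coeff a.exponent (L.symm f) := fun f a => rfl
  have hker : ∀ f, Ψ f = 0 ↔ (f : MvPolynomial σ ℝ) ∈ relations g e := by
    intro f
    constructor
    · intro h
      refine ⟨L.symm f, ?_, L.apply_symm_apply _⟩
      change _ ∈ restrictSupport _ _
      rw [mem_restrictSupport_iff]
      intro m hm hN
      rw [Finset.mem_coe, mem_support_iff] at hm
      have hev : Even m.degree := by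
        by_contra hodd
        rw [Nat.not_even_iff_odd] at hodd
        have h1 := coeff_negVars m (L.symm f)
        rw [hLs, mem_evenPart.mp f.2, hodd.neg_one_pow] at h1
        apply hm
        linarith
      let a : EvenNormal e := ⟨fun i => ⟨m i, hN i⟩, by
        rw [Finsupp.degree_eq_sum] at hev; exact hev⟩
      have ha : a.exponent = m := by ext i; rfl
      have := congrFun h a
      rw [hΨ, ha] at this
      exact hm this
    · rintro ⟨q, hq, hqf⟩
      have hq' : L.symm f = q := by rw [← hqf]; exact L.symm_apply_apply q
      funext a
      rw [hΨ, hq']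
      by_contra hne
      have : a.exponent ∈ {m | ¬ IsNormal e m} := hq (mem_support_iff.mpr hne)
      exact this fun i => (a.1 i).2
  have hsurj : Function.Surjective Ψ := by
    intro c
    let q : MvPolynomial σ ℝ := ∑ a, monomial (EvenNormal.exponent a) (c a)
    have hq : negVars q = q := by
      simp only [q, map_sum]
      refine Finset.sum_congr rfl fun a _ => ?_
      have : Even a.exponent.degree := by
        rw [Finsupp.degree_eq_sum]; exact a.2
      rw [negVars_monomial, this.neg_one_pow, one_smul]
    refine ⟨⟨L q, ?_⟩, ?_⟩
    · rw [mem_evenPart]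
      change negVars (transfer g e q) = transfer g e q
      rw [negVars_transfer hp, hq]
    · funext a
      rw [hΨ, L.symm_apply_apply]
      simp only [q, coeff_sum, coeff_monomial]
      rw [Finset.sum_eq_single a]
      · simp
      · intro b _ hb
        rw [if_neg fun h => hb (EvenNormal.exponent_injective h)]
      · simp
  let J : Ideal (evenPart σ) :=
    { carrier := {f | Ψ f = 0}
      add_mem' := fun {a b} ha hb => by
        change Ψ (a + b) = 0
        rw [map_add, show Ψ a = 0 from ha, show Ψ b = 0 from hb, add_zero]
      zero_mem' := map_zero Ψ
      smul_mem' := fun c f hf => by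
        change Ψ (c * f) = 0
        rw [hker]
        exact mul_mem_relations he hg ((hker f).mp hf) _ }
  have hfin : Module.finrank ℝ (evenPart σ ⧸ J) = Fintype.card (EvenNormal e) := by
    have e1 := (Ψ.quotKerEquivOfSurjective hsurj).finrank_eq
    rw [Module.finrank_fintype_fun_eq_card] at e1
    rw [← e1]
    exact (Submodule.quotEquivOfEq (J.restrictScalars ℝ) (LinearMap.ker Ψ) rfl).finrank_eq
  obtain ⟨φ, hφ⟩ := exists_algHom_of_odd J (by rw [hfin]; exact ho)
  refine ⟨φ, fun f h i hf => hφ f ?_⟩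
  change Ψ f = 0
  rw [hker, hf]
  exact mul_mem_relations he hg (gen_mem_relations he i) h

end Reduction

/-! ### Common zeros of odd polynomials -/

section Zeros

variable {σ : Type*}

theorem negVars_X (i : σ) : negVars (X i : MvPolynomial σ ℝ) = -X i := by simp [negVars]

/-- The quadratic monomial `X i * X j` as an even polynomial. -/
noncomputable def evenMul (i j : σ) : evenPart σ := ⟨X i * X j, by
  rw [mem_evenPart, map_mul, negVars_X, negVars_X, neg_mul_neg]⟩

variable [Fintype σ]

/-- Since `e o` is even, the signs `(-1) ^ |a|` over the box cancel, so exactly half of the box is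
even: `k` times a product of odd numbers. -/
theorem card_evenNormal_odd [DecidableEq σ] {e : σ → ℕ} (o : σ) {k : ℕ} (hk : Odd k)
    (heo : e o = 2 * k) (he : ∀ i, i ≠ o → Odd (e i)) : Odd (Fintype.card (EvenNormal e)) := by
  have h1 : (Fintype.card (EvenNormal e) : ℤ) =
      ∑ a : (i : σ) → Fin (e i), if Even (∑ i, (a i : ℕ)) then 1 else 0 := by
    rw [← Finset.sum_filter, Finset.sum_const, nsmul_one]
    congr 1
    rw [← Nat.card_eq_fintype_card]
    exact (Nat.card_eq_fintype_card (α := {a : (i : σ) → Fin (e i) // Even (∑ i, (a i : ℕ))})).trans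
      (Fintype.card_of_subtype _ (by simp))
  have h2 : ∑ a : (i : σ) → Fin (e i), (-1 : ℤ) ^ (∑ i, (a i : ℕ)) = 0 := by
    simp_rw [← Finset.prod_pow_eq_pow_sum]
    rw [← Fintype.piFinset_univ,
      ← Finset.prod_univ_sum (fun i => (Finset.univ : Finset (Fin (e i))))
        (fun i (b : Fin (e i)) => (-1 : ℤ) ^ (b : ℕ))]
    refine Finset.prod_eq_zero (Finset.mem_univ o) ?_
    rw [Fin.sum_univ_eq_sum_range (fun b => (-1 : ℤ) ^ b), heo, neg_one_geom_sum]
    simp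
  have h3 : ∑ _a : (i : σ) → Fin (e i), (1 : ℤ) = ∏ i, (e i : ℤ) := by
    simp
  have h4 : 2 * (Fintype.card (EvenNormal e) : ℤ) = ∏ i, (e i : ℤ) := by
    rw [h1, ← h3]
    suffices h : 2 * ∑ a : (i : σ) → Fin (e i), (if Even (∑ i, (a i : ℕ)) then (1 : ℤ) else 0) =
        ∑ _a : (i : σ) → Fin (e i), (1 : ℤ) +
          ∑ a : (i : σ) → Fin (e i), (-1 : ℤ) ^ (∑ i, (a i : ℕ)) by
      rw [h, h2, add_zero]
    rw [← Finset.sum_add_distrib, Finset.mul_sum]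
    refine Finset.sum_congr rfl fun a _ => ?_
    split_ifs with h
    · rw [h.neg_one_pow]; norm_num
    · rw [(Nat.not_even_iff_odd.mp h).neg_one_pow]; norm_num
  rw [← Finset.mul_prod_erase _ _ (Finset.mem_univ o), heo] at h4
  have h5 : Fintype.card (EvenNormal e) = k * ∏ i ∈ Finset.univ.erase o, e i := by
    have : (2 : ℤ) * (Fintype.card (EvenNormal e) : ℤ) =
      2 * ((k * ∏ i ∈ Finset.univ.erase o, e i : ℕ) : ℤ) := by
      rw [h4]; push_cast; ring
    exact_mod_cast mul_left_cancel₀ two_ne_zero this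
  rw [h5]
  refine hk.mul ?_
  refine Finset.prod_induction _ Odd (fun _ _ => Odd.mul) odd_one fun i hi => ?_
  exact he i (Finset.ne_of_mem_erase hi)

/-- The point is `s j = φ (X o * X j) / √(φ (X o ^ 2))`. -/
theorem exists_point_of_algHom (φ : evenPart σ →ₐ[ℝ] ℝ) (o : σ) (ho : 0 < φ (evenMul o o)) :
    ∃ s : σ → ℝ, s ≠ 0 ∧ ∀ f : evenPart σ, φ f = eval s (f : MvPolynomial σ ℝ) := by
  set r := √(φ (evenMul o o)) with hr
  have hr0 : r ≠ 0 := (Real.sqrt_pos.mpr ho).ne'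
  have hr2 : φ (evenMul o o) = r ^ 2 := (Real.sq_sqrt ho.le).symm
  let s : σ → ℝ := fun j => φ (evenMul o j) / r
  have hmon : ∀ (m : σ →₀ ℕ) (h : monomial m (1 : ℝ) ∈ evenPart σ),
      Even m.degree → φ ⟨monomial m 1, h⟩ = eval s (monomial m 1) := by
    intro m h hev
    obtain ⟨k, hk⟩ := hev
    -- Multiplying by `X o ^ m.degree` turns the monomial into a product of the `X o * X j`.
    have h1 : (evenMul o o) ^ k * ⟨monomial m 1, h⟩ = ∏ j, evenMul o j ^ m j := by
      apply Subtype.ext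
      simp only [evenMul, MulMemClass.coe_mul, SubmonoidClass.coe_pow,
        SubmonoidClass.coe_finsetProd, mul_pow, Finset.prod_mul_distrib]
      rw [Finset.prod_pow_eq_pow_sum, ← Finsupp.degree_eq_sum, hk, ← pow_add, monomial_eq,
        C_1, one_mul, Finsupp.prod_fintype _ _ (by simp)]
    have h2 := congrArg φ h1
    rw [map_mul, map_pow, map_prod, hr2, ← pow_mul, two_mul, ← hk] at h2
    have h3 : ∀ j, φ (evenMul o j) = r * s j := fun j => by simp only [s]; field_simp
    simp_rw [map_pow, h3, mul_pow] at h2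
    rw [Finset.prod_mul_distrib, Finset.prod_pow_eq_pow_sum, ← Finsupp.degree_eq_sum] at h2
    rw [mul_left_cancel₀ (pow_ne_zero _ hr0) h2, eval_monomial,
      Finsupp.prod_fintype _ _ (by simp), one_mul]
  refine ⟨s, ?_, ?_⟩
  · intro h
    have : s o = 0 := congrFun h o
    simp only [s, hr2] at this
    field_simp at this
    exact hr0 this
  intro f
  have hmem : ∀ m ∈ (f : MvPolynomial σ ℝ).support,
      Even m.degree ∧ monomial m (1 : ℝ) ∈ evenPart σ := by
    intro m hm
    rw [mem_support_iff] at hm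
    have hev : Even m.degree := by
      by_contra hodd
      rw [Nat.not_even_iff_odd] at hodd
      have h1 := coeff_negVars m (f : MvPolynomial σ ℝ)
      rw [mem_evenPart.mp f.2, hodd.neg_one_pow] at h1
      apply hm
      linarith
    refine ⟨hev, ?_⟩
    rw [mem_evenPart, negVars_monomial, hev.neg_one_pow, one_smul]
  have hf : f = ∑ m ∈ (f : MvPolynomial σ ℝ).support.attach,
      coeff m.1 (f : MvPolynomial σ ℝ) • (⟨monomial m.1 1, (hmem m.1 m.2).2⟩ : evenPart σ) := by
    apply Subtype.ext
    rw [AddSubmonoidClass.coe_finsetSum]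
    simp only [SetLike.val_smul, smul_monomial, smul_eq_mul, mul_one]
    rw [Finset.sum_attach _ (fun m => monomial m (coeff m (f : MvPolynomial σ ℝ)))]
    exact (f : MvPolynomial σ ℝ).as_sum
  conv_lhs => rw [hf]
  rw [map_sum]
  conv_rhs => rw [(f : MvPolynomial σ ℝ).as_sum, map_sum, ← Finset.sum_attach]
  refine Finset.sum_congr rfl fun m _ => ?_
  rw [map_smul, hmon _ _ (hmem m.1 m.2).1]
  simp [eval_monomial]

/-- An exact real zero of the perturbed system `p i + c X_i ^ D = 0` on the compact hypersurface
`X_o ^ (2 (K + 2)) + ∑_{i ≠ o} X_i ^ (2 K) = 1`. The larger exponent at `o` makes `X_o ^ (2 (K + 2))`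
the leading term. -/
theorem exists_zero_perturbed [DecidableEq σ] (o : σ) (p : σ → MvPolynomial σ ℝ) {K D : ℕ}
    (hK : Odd K) (hD : Odd D) (hp : ∀ i, i ≠ o → negVars (p i) = -p i)
    (hdeg : ∀ i, p i ∈ degLT σ D) {c : ℝ} (hc : 0 < c) :
    ∃ s : σ → ℝ, s o ^ (2 * (K + 2)) + ∑ i ∈ Finset.univ.erase o, s i ^ (2 * K) = 1 ∧
      ∀ i, i ≠ o → eval s (p i) = -(c * s i ^ D) := by
  let e : σ → ℕ := fun i => if i = o then 2 * (K + 2) else D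
  let u : MvPolynomial σ ℝ := ∑ i ∈ Finset.univ.erase o, X i ^ (2 * K) - 1
  let g : σ → MvPolynomial σ ℝ := fun i =>
    if i = o then X o ^ (2 * (K + 2)) + u else X i ^ D + c⁻¹ • p i
  have he : ∀ i, 0 < e i := fun i => by
    have := hD.pos
    simp only [e]; split_ifs <;> omega
  have hu : u ∈ degLT σ (2 * (K + 2)) := by
    refine sub_mem (sum_mem fun i _ => ?_) ?_
    · rw [X_pow_eq_monomial, degLT, monomial_mem_restrictSupport]
      left
      rw [Set.mem_ofPred_eq, Finsupp.degree_single]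
      omega
    · rw [← C_1, C_apply, degLT, monomial_mem_restrictSupport]
      left
      simp
  have hg : ∀ i, HasLead (g i) (Finsupp.single i (e i)) := by
    intro i
    by_cases hi : i = o
    · subst hi
      rw [HasLead, Finsupp.degree_single, ← X_pow_eq_monomial]
      simpa only [g, e, if_true, add_sub_cancel_left] using hu
    · rw [HasLead, Finsupp.degree_single, ← X_pow_eq_monomial]
      simpa only [g, e, if_neg hi, add_sub_cancel_left] using Submodule.smul_mem _ c⁻¹ (hdeg i)
  have hpar : ∀ i, negVars (g i) = (-1 : ℝ) ^ e i • g i := by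
    intro i
    by_cases hi : i = o
    · subst hi
      simp [g, e, u, negVars_X, (even_two_mul _).neg_pow]
    · simp [g, e, hi, negVars_X, hD.neg_pow, hp i hi]
  have hodd : Odd (Fintype.card (EvenNormal e)) := by
    refine card_evenNormal_odd o (k := K + 2) (hK.add_even even_two) (by simp [e]) ?_
    intro i hi
    simpa [e, hi] using hD
  obtain ⟨φ, hφ⟩ := exists_algHom_evenPart he hg hpar hodd
  have hgo : evenMul o o ^ (K + 2) + (∑ i ∈ Finset.univ.erase o, evenMul i i ^ K - 1) =
      (⟨g o, by rw [mem_evenPart, hpar]; simp [e]⟩ : evenPart σ) := by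
    apply Subtype.ext
    simp [g, u, evenMul, ← pow_two, ← pow_mul]
  have hφo := hφ ⟨g o, by rw [mem_evenPart, hpar]; simp [e]⟩ 1 o (by simp)
  have hpos : ∃ i, 0 < φ (evenMul i i) := by
    by_contra! hneg
    rw [← hgo] at hφo
    simp only [map_add, map_sub, map_pow, map_sum, map_one] at hφo
    have h1 : φ (evenMul o o) ^ (K + 2) ≤ 0 :=
      (hK.add_even even_two).pow_nonpos (hneg o)
    have h2 : ∑ i ∈ Finset.univ.erase o, φ (evenMul i i) ^ K ≤ 0 :=
      Finset.sum_nonpos fun i _ => hK.pow_nonpos (hneg i)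
    linarith
  obtain ⟨i₀, hi₀⟩ := hpos
  obtain ⟨s, hs0, hs⟩ := exists_point_of_algHom φ i₀ hi₀
  refine ⟨s, ?_, ?_⟩
  · rw [hs] at hφo
    simp only [g, u, if_true, map_add, map_sub, map_sum, map_pow, eval_X, map_one] at hφo
    linarith
  · intro i hi
    obtain ⟨j, hj⟩ := Function.ne_iff.mp hs0
    -- `g i` is odd, so only its multiple by `X j` lies in the domain of `φ`.
    have hmem : X j * g i ∈ evenPart σ := by
      rw [mem_evenPart, map_mul, hpar, negVars_X]
      simp [e, hi, hD.neg_one_pow]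
    have h1 := hφ ⟨X j * g i, hmem⟩ (X j) i rfl
    rw [hs] at h1
    simp only [map_mul, eval_X, mul_eq_zero] at h1
    have h2 : eval s (g i) = 0 := h1.resolve_left hj
    simp only [g, if_neg hi, map_add, map_pow, eval_X, smul_eval] at h2
    field_simp at h2
    linarith

/-- Borsuk–Ulam for polynomials: odd polynomials, one fewer than the number of variables, have a
common zero in the cube `[-1, 1]^σ` at distance at least `1/2` from the origin in the sup norm. The
value `p o` plays no role. -/
theorem exists_zero_odd [DecidableEq σ] (o : σ) (p : σ → MvPolynomial σ ℝ)
    (hp : ∀ i, i ≠ o → negVars (p i) = -p i) :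
    ∃ s : σ → ℝ, (∀ i, |s i| ≤ 1) ∧ (∃ i, 1 / 2 ≤ |s i|) ∧ ∀ i, i ≠ o → eval s (p i) = 0 := by
  let K := 2 * Fintype.card σ + 1
  have hK : Odd K := ⟨_, rfl⟩
  choose k hk using fun i => mem_degLT_of_all (p i)
  let D := 2 * ∑ i, k i + 1
  have hD : Odd D := ⟨_, rfl⟩
  have hdeg : ∀ i, p i ∈ degLT σ D := fun i => degLT_mono (by
    have := Finset.single_le_sum (f := k) (fun _ _ => Nat.zero_le _) (Finset.mem_univ i)
    simp only [D]; omega) (hk i)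
  let w : (σ → ℝ) → ℝ := fun s =>
    s o ^ (2 * (K + 2)) + ∑ i ∈ Finset.univ.erase o, s i ^ (2 * K)
  have hwc : Continuous w := by fun_prop
  have hnn : ∀ (s : σ → ℝ) (i : σ) (n : ℕ), 0 ≤ s i ^ (2 * n) := fun s i n =>
    (even_two_mul n).pow_nonneg _
  have hle : ∀ s, w s = 1 → ∀ i, |s i| ≤ 1 := by
    intro s hs i
    have key : ∃ n, n ≠ 0 ∧ s i ^ (2 * n) ≤ 1 := by
      by_cases hi : i = o
      · subst hi
        refine ⟨K + 2, by omega, ?_⟩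
        have := Finset.sum_nonneg (s := Finset.univ.erase i) fun j _ => hnn s j K
        simp only [w] at hs
        linarith
      · refine ⟨K, by omega, ?_⟩
        have := Finset.single_le_sum (s := Finset.univ.erase o) (fun j _ => hnn s j K)
          (Finset.mem_erase.mpr ⟨hi, Finset.mem_univ i⟩)
        have := hnn s o (K + 2)
        simp only [w] at hs
        linarith
    obtain ⟨n, hn, h⟩ := key
    rw [← (even_two_mul n).pow_abs] at h
    exact (pow_le_one_iff_of_nonneg (abs_nonneg _) (by omega)).mp h
  let S : Set (σ → ℝ) := {s | w s = 1}
  have hScl : IsClosed S := isClosed_eq hwc continuous_const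
  have hSc : IsCompact S := by
    refine (isCompact_univ_pi fun _ : σ => isCompact_Icc (a := (-1 : ℝ)) (b := 1)).of_isClosed_subset
      hScl ?_
    intro s hs i _
    exact abs_le.mp (hle s hs i)
  let F : (σ → ℝ) → ℝ := fun s => ∑ i ∈ Finset.univ.erase o, |eval s (p i)|
  have hF : Continuous F := by
    refine continuous_finsetSum _ fun i _ => ?_
    exact (MvPolynomial.continuous_eval (p i)).abs
  have hFs : ∀ c : ℝ, 0 < c → ∃ s ∈ S, F s ≤ c * Fintype.card σ := by
    intro c hc
    obtain ⟨s, hs, h⟩ := exists_zero_perturbed o p hK hD hp hdeg hc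
    refine ⟨s, hs, ?_⟩
    calc F s ≤ ∑ i ∈ Finset.univ.erase o, c := by
          refine Finset.sum_le_sum fun i hi => ?_
          rw [h i (Finset.ne_of_mem_erase hi), abs_neg, abs_mul, abs_of_pos hc, abs_pow]
          exact mul_le_of_le_one_right hc.le (pow_le_one₀ (abs_nonneg _) (hle s hs i))
      _ ≤ ∑ _i : σ, c := Finset.sum_le_sum_of_subset_of_nonneg (Finset.subset_univ _)
          fun _ _ _ => hc.le
      _ = c * Fintype.card σ := by simp [mul_comm]
  obtain ⟨s, hs, hmin⟩ := hSc.exists_isMinOn ⟨_, (hFs 1 one_pos).choose_spec.1⟩ hF.continuousOn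
  have hF0 : F s ≤ 0 := by
    refine le_of_forall_pos_le_add fun ε hε => ?_
    have hcard : (0 : ℝ) < Fintype.card σ := by
      exact_mod_cast Fintype.card_pos_iff.mpr ⟨o⟩
    obtain ⟨s', hs', h⟩ := hFs (ε / Fintype.card σ) (by positivity)
    have := hmin hs'
    rw [div_mul_cancel₀ _ hcard.ne'] at h
    simp only [Set.mem_ofPred_eq] at this
    linarith
  refine ⟨s, hle s hs, ?_, ?_⟩
  · by_contra! hlt
    -- If all `|s i| < 1/2`, the sum `w s` is at most `card σ * 4 ^ (-K) < 1`.
    have h4 : ∀ i n, K ≤ n → s i ^ (2 * n) ≤ (1 / 4 : ℝ) ^ K := by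
      intro i n hn
      rw [← (even_two_mul n).pow_abs]
      calc |s i| ^ (2 * n) ≤ (1 / 2 : ℝ) ^ (2 * n) :=
            pow_le_pow_left₀ (abs_nonneg _) (hlt i).le _
        _ = (1 / 4 : ℝ) ^ n := by rw [pow_mul]; norm_num
        _ ≤ (1 / 4 : ℝ) ^ K := pow_le_pow_of_le_one (by norm_num) (by norm_num) hn
    have h5 : w s ≤ ∑ _i : σ, (1 / 4 : ℝ) ^ K := by
      rw [← Finset.add_sum_erase _ _ (Finset.mem_univ o)]
      exact add_le_add (h4 o _ (by omega)) (Finset.sum_le_sum fun i _ => h4 i K le_rfl)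
    rw [show w s = 1 from hs] at h5
    simp only [Finset.sum_const, Finset.card_univ, nsmul_eq_mul, one_div, inv_pow] at h5
    have h6 : (Fintype.card σ : ℝ) < 4 ^ K := by
      have : Fintype.card σ < 4 ^ K :=
        (Nat.lt_pow_self (by norm_num)).trans (Nat.pow_lt_pow_right (by norm_num) (by omega))
      exact_mod_cast this
    rw [← div_eq_mul_inv, le_div_iff₀ (by positivity)] at h5
    linarith
  · intro i hi
    have := Finset.single_le_sum (s := Finset.univ.erase o) (f := fun i => |eval s (p i)|)
      (fun j _ => abs_nonneg _) (Finset.mem_erase.mpr ⟨hi, Finset.mem_univ i⟩)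
    exact abs_nonpos_iff.mp (this.trans hF0)

end Zeros

/-! ### Separated points and their moments -/

section Points

/-- Greedy packing: `n < (R / δ) ^ d` balls of radius `δ` do not have enough volume to cover the
ball of radius `R`, so a further point can always be added. -/
theorem exists_separated (d : ℕ) (R δ : ℝ) (hδ : 0 < δ) (hR : 0 < R) (N : ℕ)
    (hN : (N : ℝ) ≤ (R / δ) ^ d) :
    ∃ x : Fin N → EuclideanSpace ℝ (Fin d),
      (∀ i, ‖x i‖ ≤ R) ∧ ∀ i j, i ≠ j → δ ≤ ‖x i - x j‖ := by
  induction N with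
  | zero => exact ⟨fun i => i.elim0, fun i => i.elim0, fun i => i.elim0⟩
  | succ n ih =>
    have hn : (n : ℝ) < (R / δ) ^ d := by
      push_cast at hN
      linarith
    obtain ⟨x, hx, hsep⟩ := ih hn.le
    obtain ⟨y, hy, hyx⟩ : ∃ y ∈ Metric.ball (0 : EuclideanSpace ℝ (Fin d)) R,
        y ∉ ⋃ i, Metric.ball (x i) δ := by
      by_contra! hcov
      have hle := (MeasureTheory.measure_mono (μ := MeasureTheory.volume) hcov).trans
        (MeasureTheory.measure_iUnion_le _)
      simp only [MeasureTheory.Measure.addHaar_ball_of_pos _ _ hδ,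
        MeasureTheory.Measure.addHaar_ball_of_pos _ _ hR, finrank_euclideanSpace_fin,
        tsum_fintype, Finset.sum_const, Finset.card_univ, Fintype.card_fin, nsmul_eq_mul] at hle
      rw [← mul_assoc, ENNReal.mul_le_mul_iff_left
        (Metric.measure_ball_pos _ _ one_pos).ne' MeasureTheory.measure_ball_lt_top.ne,
        ← ENNReal.ofReal_natCast, ← ENNReal.ofReal_mul (by positivity),
        ENNReal.ofReal_le_ofReal_iff (by positivity)] at hle
      rw [div_pow, lt_div_iff₀ (by positivity)] at hn
      linarith
    have hyx' : ∀ i, δ ≤ ‖y - x i‖ := fun i => by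
      by_contra! h
      exact hyx (Set.mem_iUnion.mpr ⟨i, mem_ball_iff_norm.mpr h⟩)
    refine ⟨Fin.cons y x, fun i => ?_, fun i j hij => ?_⟩
    · refine Fin.cases ?_ (fun i => ?_) i
      · simpa using (mem_ball_zero_iff.mp hy).le
      · simpa using hx i
    · induction i using Fin.cases with
      | zero =>
        induction j using Fin.cases with
        | zero => exact absurd rfl hij
        | succ j => simpa using hyx' j
      | succ i =>
        induction j using Fin.cases with
        | zero => simpa [norm_sub_rev] using hyx' i
        | succ j => simpa using hsep i j fun h => hij (by rw [h])

theorem choose_lt_exp_pow (d t : ℕ) (hd : 1 ≤ d) :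
    ((t + d).choose d : ℝ) < (Real.exp 1 * ((t : ℝ) + d) / d) ^ d := by
  have hd0 : (0 : ℝ) < d := by exact_mod_cast hd
  have h1 : ((t + d).choose d : ℝ) ≤ ((t : ℝ) + d) ^ d / d.factorial := by
    have := Nat.choose_le_pow_div (α := ℝ) d (t + d)
    push_cast at this
    exact this
  have h2 : (d : ℝ) ^ d / d.factorial < Real.exp d := by
    have h := Real.sum_le_exp_of_nonneg hd0.le (d + 1)
    rw [Finset.sum_range_succ] at h
    have : (0 : ℝ) < ∑ i ∈ Finset.range d, (d : ℝ) ^ i / i.factorial :=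
      Finset.sum_pos (fun i _ => by positivity) ⟨0, by simp; omega⟩
    linarith
  have h3 : Real.exp d = Real.exp 1 ^ d := by rw [← Real.exp_nat_mul, mul_one]
  calc ((t + d).choose d : ℝ) ≤ ((t : ℝ) + d) ^ d / d.factorial := h1
    _ = (d : ℝ) ^ d / d.factorial * (((t : ℝ) + d) ^ d / (d : ℝ) ^ d) := by field_simp
    _ < Real.exp d * (((t : ℝ) + d) ^ d / (d : ℝ) ^ d) := by
        apply mul_lt_mul_of_pos_right h2; positivity
    _ = (Real.exp 1 * ((t : ℝ) + d) / d) ^ d := by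
        rw [h3, div_pow, mul_pow, mul_div_assoc]

/-- The coordinates of a point, extended by the constant `1`. Products of exactly `t` extended
coordinates are the monomials of degree at most `t`, which are thus indexed by
`Sym (Option (Fin d)) t`. -/
def extCoord {d : ℕ} {A : Type*} [One A] (y : Fin d → A) : Option (Fin d) → A
  | none => 1
  | some j => y j

theorem sum_eval_eq {d t N : ℕ} {P Q : Fin N → Fin d → ℝ}
    (h : ∀ a : Sym (Option (Fin d)) t,
      ∑ k, (a.1.map (extCoord (P k))).prod = ∑ k, (a.1.map (extCoord (Q k))).prod)
    (q : MvPolynomial (Fin d) ℝ) (hq : q.totalDegree ≤ t) :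
    ∑ k, eval (P k) q = ∑ k, eval (Q k) q := by
  have key : ∀ m ∈ q.support, ∃ a : Sym (Option (Fin d)) t, ∀ y : Fin d → ℝ,
      (a.1.map (extCoord y)).prod = ∏ j, y j ^ m j := by
    intro m hm
    have hdeg : Multiset.card (Finsupp.toMultiset m) ≤ t := by
      rw [Finsupp.card_toMultiset]
      exact (le_totalDegree hm).trans hq
    refine ⟨⟨(Finsupp.toMultiset m).map some +
      Multiset.replicate (t - Multiset.card (Finsupp.toMultiset m)) none, ?_⟩, fun y => ?_⟩
    · rw [Multiset.card_add, Multiset.card_map, Multiset.card_replicate]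
      omega
    · change (((Finsupp.toMultiset m).map some + Multiset.replicate _ none).map
        (extCoord y)).prod = _
      rw [Multiset.map_add, Multiset.prod_add, Multiset.map_map, Multiset.map_replicate,
        Multiset.prod_replicate]
      simp only [extCoord, one_pow, mul_one]
      change ((Finsupp.toMultiset m).map y).prod = _
      rw [Finsupp.toMultiset_map, Finsupp.prod_toMultiset, Finsupp.prod_mapDomain_index
        (by simp) (by intros; rw [pow_add]), Finsupp.prod_fintype _ _ (by simp)]
  simp_rw [eval_eq']
  rw [Finset.sum_comm, Finset.sum_comm (s := Finset.univ) (t := q.support)]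
  refine Finset.sum_congr rfl fun m hm => ?_
  obtain ⟨a, ha⟩ := key m hm
  rw [← Finset.mul_sum, ← Finset.mul_sum]
  simp_rw [← ha]
  rw [h a]

/-- The point `x k` moved by `c * s k` in the coordinate direction `j₀`. -/
noncomputable def moved {d N : ℕ} (x : Fin N → EuclideanSpace ℝ (Fin d)) (j₀ : Fin d) (c : ℝ)
    (s : Fin N → ℝ) (k : Fin N) : EuclideanSpace ℝ (Fin d) :=
  x k + EuclideanSpace.single j₀ (c * s k)

/-- The `j`-th coordinate of `moved` as a polynomial in `s`. -/
noncomputable def movedPoly {d N : ℕ} (x : Fin N → EuclideanSpace ℝ (Fin d)) (j₀ : Fin d) (c : ℝ)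
    (k : Fin N) (j : Fin d) : MvPolynomial (Fin N) ℝ :=
  C (x k j) + if j = j₀ then C c * X k else 0

/-- Replacing `c` by `-c` amounts to replacing `s` by `-s`, so every moment difference is an odd
polynomial in `s` and `exists_zero_odd` applies. -/
theorem exists_moved_moments_eq {d t N : ℕ} (hcard : (t + d).choose d < N)
    (x : Fin N → EuclideanSpace ℝ (Fin d)) (j₀ : Fin d) (c : ℝ) :
    ∃ s : Fin N → ℝ, (∀ k, |s k| ≤ 1) ∧ (∃ k, 1 / 2 ≤ |s k|) ∧
      ∀ q : MvPolynomial (Fin d) ℝ, q.totalDegree ≤ t →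
        ∑ k, eval (moved x j₀ c s k) q = ∑ k, eval (moved x j₀ (-c) s k) q := by
  let o : Fin N := ⟨0, by omega⟩
  let pa : Sym (Option (Fin d)) t → MvPolynomial (Fin N) ℝ := fun a =>
    ∑ k, ((a.1.map (extCoord (movedPoly x j₀ c k))).prod -
      (a.1.map (extCoord (movedPoly x j₀ (-c) k))).prod)
  have hneg : ∀ (c : ℝ) (k : Fin N) (a : Multiset (Option (Fin d))),
      negVars (a.map (extCoord (movedPoly x j₀ c k))).prod =
        (a.map (extCoord (movedPoly x j₀ (-c) k))).prod := by
    intro c k a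
    rw [map_multiset_prod, Multiset.map_map]
    congr 1
    refine Multiset.map_congr rfl fun j _ => ?_
    cases j with
    | none => simp [extCoord]
    | some j =>
      simp only [Function.comp, extCoord, movedPoly]
      split_ifs <;> simp [negVars]
  have heval : ∀ (c : ℝ) (s : Fin N → ℝ) (k : Fin N) (a : Multiset (Option (Fin d))),
      eval s (a.map (extCoord (movedPoly x j₀ c k))).prod =
        (a.map (extCoord (moved x j₀ c s k))).prod := by
    intro c s k a
    rw [map_multiset_prod, Multiset.map_map]
    congr 1
    refine Multiset.map_congr rfl fun j _ => ?_
    cases j with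
    | none => simp [extCoord]
    | some j =>
      simp only [Function.comp, extCoord, movedPoly, moved]
      by_cases h : j = j₀ <;> simp [h]
  have hpa : ∀ a, negVars (pa a) = -pa a := by
    intro a
    simp only [pa, map_sum, map_sub, hneg, neg_neg, ← Finset.sum_neg_distrib, neg_sub]
  have hle : Fintype.card (Sym (Option (Fin d)) t) ≤ Fintype.card {i : Fin N // i ≠ o} := by
    rw [Sym.card_sym_eq_choose, Fintype.card_option, Fintype.card_fin]
    have h1 : (d + 1 + t - 1).choose t = (t + d).choose d := by
      rw [show d + 1 + t - 1 = t + d by omega, Nat.choose_symm_add]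
    have h2 : Fintype.card {i : Fin N // i ≠ o} = N - 1 := by
      simp [Fintype.card_subtype_compl]
    omega
  obtain ⟨emb⟩ := Function.Embedding.nonempty_of_card_le hle
  let v : Sym (Option (Fin d)) t → Fin N := fun a => (emb a).1
  have hv : Function.Injective v := Subtype.val_injective.comp emb.injective
  obtain ⟨s, hs1, hs2, hs⟩ := exists_zero_odd o (Function.extend v pa 0) (by
    intro i _
    by_cases hi : ∃ a, v a = i
    · obtain ⟨a, rfl⟩ := hi
      rw [hv.extend_apply, hpa]
    · rw [Function.extend_apply' _ _ _ hi]
      simp)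
  refine ⟨s, hs1, hs2, sum_eval_eq fun a => ?_⟩
  have h := hs (v a) (emb a).2
  rw [hv.extend_apply] at h
  simp only [pa, map_sum, map_sub, heval, Finset.sum_sub_distrib] at h
  linarith

end Points

/-- Lemma "matching-moments": two Δ-separated point sets in the ball of radius `2R`
whose parameters differ by at least `Δ` under any matching, but whose first `t`
moment tensors coincide. -/
theorem matching_moments_point_sets
    (d t N : ℕ) (hd : 1 ≤ d) (ht : 1 ≤ t) (hN : 1 ≤ N)
    (R Δ : ℝ) (hΔ : 0 < Δ) (hRΔ : Δ < R)
    (hlow : (Real.exp 1 * ((t : ℝ) + d) / d) ^ d ≤ (N : ℝ))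
    (hhigh : (N : ℝ) ≤ (R / (3 * Δ)) ^ d) :
    ∃ μP μQ : Fin N → EuclideanSpace ℝ (Fin d),
      (∀ i, ‖μP i‖ ≤ 2 * R) ∧ (∀ i, ‖μQ i‖ ≤ 2 * R) ∧
      (∀ i j, i ≠ j → Δ ≤ ‖μP i - μP j‖) ∧
      (∀ i j, i ≠ j → Δ ≤ ‖μQ i - μQ j‖) ∧
      (∀ π : Equiv.Perm (Fin N), ∃ i, Δ ≤ ‖μP i - μQ (π i)‖) ∧
      (∀ t' : ℕ, 1 ≤ t' → t' ≤ t → ∀ ξ : EuclideanSpace ℝ (Fin d),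
        ∑ i : Fin N, (⟪ξ, μP i⟫ : ℝ) ^ t' = ∑ i : Fin N, (⟪ξ, μQ i⟫ : ℝ) ^ t') := by
  obtain ⟨x, hxR, hsep⟩ := exists_separated d R (3 * Δ) (by linarith) (by linarith) N hhigh
  have hcard : (t + d).choose d < N := by
    exact_mod_cast (choose_lt_exp_pow d t hd).trans_le hlow
  let j₀ : Fin d := ⟨0, by omega⟩
  obtain ⟨s, hs1, ⟨k₀, hk₀⟩, hmom⟩ := exists_moved_moments_eq hcard x j₀ Δ
  have hdist : ∀ (c : ℝ), |c| = Δ → ∀ k, ‖moved x j₀ c s k - x k‖ ≤ Δ := by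
    intro c hc k
    rw [moved, add_sub_cancel_left, PiLp.norm_single, Real.norm_eq_abs, abs_mul, hc]
    exact mul_le_of_le_one_right hΔ.le (hs1 k)
  have hP := hdist Δ (abs_of_pos hΔ)
  have hQ := hdist (-Δ) (by rw [abs_neg, abs_of_pos hΔ])
  have hnorm : ∀ y : Fin N → EuclideanSpace ℝ (Fin d), (∀ k, ‖y k - x k‖ ≤ Δ) →
      ∀ k, ‖y k‖ ≤ 2 * R := by
    intro y hy k
    have := norm_le_norm_add_norm_sub (x k) (y k)
    have := hxR k
    have := hy k
    rw [norm_sub_rev] at this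
    linarith
  have hfar : ∀ y z : Fin N → EuclideanSpace ℝ (Fin d), (∀ k, ‖y k - x k‖ ≤ Δ) →
      (∀ k, ‖z k - x k‖ ≤ Δ) → ∀ i j, i ≠ j → Δ ≤ ‖y i - z j‖ := by
    intro y z hy hz i j hij
    have h1 := hsep i j hij
    have h2 : ‖x i - x j‖ ≤ ‖y i - x i‖ + ‖y i - z j‖ + ‖z j - x j‖ := by
      have e : x i - x j = -(y i - x i) + (y i - z j) + (z j - x j) := by abel
      rw [e, ← norm_neg (y i - x i)]
      exact norm_add₃_le
    have := hy i
    have := hz j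
    linarith
  refine ⟨moved x j₀ Δ s, moved x j₀ (-Δ) s, hnorm _ hP, hnorm _ hQ, hfar _ _ hP hP,
    hfar _ _ hQ hQ, fun π => ?_, fun t' _ ht' ξ => ?_⟩
  · by_cases hπ : π k₀ = k₀
    · refine ⟨k₀, ?_⟩
      have e : moved x j₀ Δ s k₀ - moved x j₀ (-Δ) s k₀ =
          EuclideanSpace.single j₀ (2 * (Δ * s k₀)) := by
        ext j
        by_cases h : j = j₀ <;> simp [moved, h]
        ring
      rw [hπ, e, PiLp.norm_single, Real.norm_eq_abs, abs_mul, abs_mul,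
        abs_of_pos hΔ, abs_two]
      nlinarith
    · exact ⟨k₀, hfar _ _ hP hQ _ _ (Ne.symm hπ)⟩
  · have h := hmom ((∑ j, C (ξ j) * X j) ^ t') (by
      refine (totalDegree_pow _ _).trans ?_
      have : (∑ j, C (ξ j) * X j : MvPolynomial (Fin d) ℝ).totalDegree ≤ 1 := by
        refine totalDegree_finsetSum_le fun j _ => ?_
        refine (totalDegree_mul _ _).trans ?_
        simp
      nlinarith)
    have hin : ∀ y : EuclideanSpace ℝ (Fin d), ⟪ξ, y⟫ = ∑ j, ξ j * y j := fun y => by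
      rw [PiLp.inner_apply]
      simp [mul_comm]
    simp only [map_pow, map_sum, map_mul, eval_C, eval_X] at h
    simp only [hin]
    exact h
end

section
/- Let d ≥ 1 be an integer, R > 0, and let P and Q be probability measures on ℝ^d supported in the closed Euclidean ball of radius 2R centered at the origin. Define the densities p̃(x) = ∫ (2π)^{−d/2} e^{−‖x−μ‖₂²/2} dP(μ) and q̃(x) = ∫ (2π)^{−d/2} e^{−‖x−μ‖₂²/2} dQ(μ). Then for every ε ∈ (0,1), setting R' = 2R + √d + √(2 ln(1/ε)), one has (1/2) ∫_{ℝ^d} |p̃(x) − q̃(x)| dx ≤ ε + (1/2) · √(Vol_d(R')) · ( ∫_{ℝ^d} (p̃(x) − q̃(x))² dx )^{1/2}, where Vol_d(r) = π^{d/2} r^d / Γ(d/2 + 1) is the volume of the Euclidean ball of radius r in ℝ^d. -/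
open MeasureTheory Real

/-!
Write `h = p̃ - q̃` and split `∫ |h|` over the closed ball `B` of radius `R'` about the origin and
its complement. On `B`, Cauchy–Schwarz gives `∫_B |h| ≤ √vol(B) · √(∫ h²)`. Off `B`, use
`|h| ≤ p̃ + q̃`: by Fubini the mass of `p̃` outside `B` is an average over `μ`, with `‖μ‖ ≤ 2R`,
of the mass that the Gaussian centred at `μ` puts outside `B`, hence at distance more than
`√d + t` from `μ`, where `t = √(2 ln(1/ε))`. So it suffices that a standard Gaussian vector `Z`
satisfies `ℙ(‖Z‖ > √d + t) ≤ exp(-t²/2) = ε`.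

This tail bound is the Chernoff bound for `‖Z‖²`. With `s = √d + t` and `b = d / (2s²) ≤ 1/2`, on
`‖z‖ ≥ s` one has `exp(-‖z‖²/2) ≤ exp(-(1/2 - b)s²) exp(-b‖z‖²)`; integrating gives
`(s/√d)^d exp(-(s² - d)/2) = (1 + t/√d)^d exp(-t√d - t²/2) ≤ exp(-t²/2)`.
-/

/-- The standard Gaussian density on `ℝ^d`. -/
noncomputable def gaussDensity (d : ℕ) (x : EuclideanSpace ℝ (Fin d)) : ℝ :=
  (2 * π) ^ (-(d : ℝ) / 2) * Real.exp (-‖x‖ ^ 2 / 2)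

/-- The density of `P ∗ N(0, I_d)`. -/
noncomputable def smoothed (d : ℕ) (P : Measure (EuclideanSpace ℝ (Fin d)))
    (x : EuclideanSpace ℝ (Fin d)) : ℝ :=
  ∫ μ, gaussDensity d (x - μ) ∂P

lemma gaussDensity_nonneg (d : ℕ) (x : EuclideanSpace ℝ (Fin d)) : 0 ≤ gaussDensity d x := by
  unfold gaussDensity; positivity

lemma gaussDensity_le (d : ℕ) (x : EuclideanSpace ℝ (Fin d)) :
    gaussDensity d x ≤ (2 * π) ^ (-(d : ℝ) / 2) := by
  unfold gaussDensity
  have h : Real.exp (-‖x‖ ^ 2 / 2) ≤ 1 := by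
    rw [Real.exp_le_one_iff]
    have := sq_nonneg ‖x‖
    linarith
  exact mul_le_of_le_one_right (by positivity) h

lemma continuous_gaussDensity (d : ℕ) : Continuous (gaussDensity d) := by
  unfold gaussDensity; fun_prop

lemma integrable_exp_neg_mul_sq_norm (d : ℕ) {b : ℝ} (hb : 0 < b) :
    Integrable (fun x : EuclideanSpace ℝ (Fin d) => Real.exp (-b * ‖x‖ ^ 2)) := by
  apply Integrable.of_integral_ne_zero
  rw [GaussianFourier.integral_rexp_neg_mul_sq_norm hb]
  positivity

lemma integrable_gaussDensity (d : ℕ) : Integrable (gaussDensity d) := by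
  have h := (integrable_exp_neg_mul_sq_norm d (b := 1 / 2) (by norm_num)).const_mul
    ((2 * π) ^ (-(d : ℝ) / 2))
  refine h.congr (Filter.Eventually.of_forall fun x => ?_)
  simp only [gaussDensity]
  congr 2
  ring

/-! ### The Gaussian tail -/

/-- The Chernoff constant at the optimal exponent is at most `exp(-t²/2)`. -/
lemma chernoff_constant_le (d : ℕ) (hd : 1 ≤ d) (t : ℝ) (ht : 0 ≤ t) (s b : ℝ)
    (hs : s = Real.sqrt d + t) (hb : b = d / (2 * s ^ 2)) :
    (2 * π) ^ (-(d : ℝ) / 2) * Real.exp (-(1 / 2 - b) * s ^ 2) * (π / b) ^ ((d : ℝ) / 2)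
      ≤ Real.exp (-t ^ 2 / 2) := by
  have hd0 : (0 : ℝ) < d := by exact_mod_cast hd
  have hsd : 0 < Real.sqrt d := Real.sqrt_pos.mpr hd0
  have hsq : Real.sqrt d ^ 2 = d := Real.sq_sqrt hd0.le
  have hs0 : 0 < s := by rw [hs]; positivity
  have hπb : π / b = (2 * π) * (s / Real.sqrt d) ^ 2 := by
    rw [hb, div_pow, hsq]
    field_simp
  have hpow : ((s / Real.sqrt d) ^ 2) ^ ((d : ℝ) / 2) = (s / Real.sqrt d) ^ d := by
    rw [← Real.rpow_natCast (s / Real.sqrt d) 2, ← Real.rpow_mul (by positivity),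
      ← Real.rpow_natCast]
    congr 1
    push_cast
    ring
  have hcancel : (2 * π) ^ (-(d : ℝ) / 2) * (2 * π) ^ ((d : ℝ) / 2) = 1 := by
    rw [← Real.rpow_add (by positivity)]
    ring_nf
    exact Real.rpow_zero _
  have hexp : -(1 / 2 - b) * s ^ 2 = -(t * Real.sqrt d) + -t ^ 2 / 2 := by
    have h1 : b * s ^ 2 = d / 2 := by rw [hb]; field_simp
    have h2 : s ^ 2 = d + 2 * t * Real.sqrt d + t ^ 2 := by rw [hs, add_sq, hsq]; ring
    linear_combination h1 - h2 / 2
  have hle : (s / Real.sqrt d) ^ d ≤ Real.exp (t * Real.sqrt d) := by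
    have h1 : s / Real.sqrt d ≤ Real.exp (t / Real.sqrt d) := by
      have h := Real.add_one_le_exp (t / Real.sqrt d)
      have h2 : s / Real.sqrt d = t / Real.sqrt d + 1 := by rw [hs]; field_simp; ring
      linarith
    calc (s / Real.sqrt d) ^ d ≤ Real.exp (t / Real.sqrt d) ^ d :=
          pow_le_pow_left₀ (by positivity) h1 d
      _ = Real.exp (t * Real.sqrt d) := by
          rw [← Real.exp_nat_mul]
          congr 1
          field_simp
          rw [hsq, mul_comm]
  rw [hπb, Real.mul_rpow (x := 2 * π) (by positivity) (by positivity), hpow, hexp, Real.exp_add]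
  calc (2 * π) ^ (-(d : ℝ) / 2) * (Real.exp (-(t * Real.sqrt d)) * Real.exp (-t ^ 2 / 2))
        * ((2 * π) ^ ((d : ℝ) / 2) * (s / Real.sqrt d) ^ d)
      = ((2 * π) ^ (-(d : ℝ) / 2) * (2 * π) ^ ((d : ℝ) / 2))
        * ((s / Real.sqrt d) ^ d * Real.exp (-(t * Real.sqrt d))) * Real.exp (-t ^ 2 / 2) := by
        ring
    _ ≤ 1 * (Real.exp (t * Real.sqrt d) * Real.exp (-(t * Real.sqrt d)))
        * Real.exp (-t ^ 2 / 2) := by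
        rw [hcancel]; gcongr
    _ = Real.exp (-t ^ 2 / 2) := by rw [← Real.exp_add]; simp

lemma gaussDensity_tail (d : ℕ) (hd : 1 ≤ d) (r t : ℝ) (ht : 0 ≤ t)
    (μ : EuclideanSpace ℝ (Fin d)) (hμ : ‖μ‖ ≤ r) :
    ∫ x in (Metric.closedBall (0 : EuclideanSpace ℝ (Fin d)) (r + Real.sqrt d + t))ᶜ,
      gaussDensity d (x - μ) ≤ Real.exp (-t ^ 2 / 2) := by
  have hd0 : (0 : ℝ) < d := by exact_mod_cast hd
  have hsd : 0 < Real.sqrt d := Real.sqrt_pos.mpr hd0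
  have hsq : Real.sqrt d ^ 2 = d := Real.sq_sqrt hd0.le
  obtain ⟨s, hs⟩ : ∃ s, s = Real.sqrt d + t := ⟨_, rfl⟩
  have hs0 : 0 < s := by rw [hs]; positivity
  obtain ⟨b, hb⟩ : ∃ b, b = d / (2 * s ^ 2) := ⟨_, rfl⟩
  have hb0 : 0 < b := by rw [hb]; positivity
  have hb1 : b ≤ 1 / 2 := by
    rw [hb, div_le_iff₀ (by positivity)]
    have : s ^ 2 ≥ Real.sqrt d ^ 2 := by
      apply pow_le_pow_left₀ hsd.le; linarith
    linarith
  set C : ℝ := (2 * π) ^ (-(d : ℝ) / 2) * Real.exp (-(1 / 2 - b) * s ^ 2) with hC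
  have hC0 : 0 ≤ C := by positivity
  have hint : Integrable (fun x : EuclideanSpace ℝ (Fin d) =>
      C * Real.exp (-b * ‖x - μ‖ ^ 2)) :=
    ((integrable_exp_neg_mul_sq_norm d hb0).comp_sub_right μ).const_mul C
  calc ∫ x in (Metric.closedBall (0 : EuclideanSpace ℝ (Fin d)) (r + Real.sqrt d + t))ᶜ,
        gaussDensity d (x - μ)
      ≤ ∫ x in (Metric.closedBall (0 : EuclideanSpace ℝ (Fin d)) (r + Real.sqrt d + t))ᶜ,
        C * Real.exp (-b * ‖x - μ‖ ^ 2) := by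
        refine setIntegral_mono_on ((integrable_gaussDensity d).comp_sub_right μ).integrableOn
          hint.integrableOn Metric.isClosed_closedBall.measurableSet.compl fun x hx => ?_
        have hx' : r + Real.sqrt d + t < ‖x‖ := by simpa using hx
        have hxs : s ≤ ‖x - μ‖ := by
          have := norm_sub_norm_le x μ
          linarith
        have hxs2 : s ^ 2 ≤ ‖x - μ‖ ^ 2 := pow_le_pow_left₀ hs0.le hxs 2
        rw [gaussDensity, hC, mul_assoc, ← Real.exp_add]
        gcongr
        nlinarith
    _ ≤ ∫ x : EuclideanSpace ℝ (Fin d), C * Real.exp (-b * ‖x - μ‖ ^ 2) :=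
        setIntegral_le_integral hint (Filter.Eventually.of_forall fun x => by
          simp only [Pi.zero_apply]; positivity)
    _ = C * (π / b) ^ ((d : ℝ) / 2) := by
        rw [integral_const_mul,
          integral_sub_right_eq_self (fun x : EuclideanSpace ℝ (Fin d) =>
            Real.exp (-b * ‖x‖ ^ 2)) μ,
          GaussianFourier.integral_rexp_neg_mul_sq_norm hb0, finrank_euclideanSpace_fin]
    _ ≤ Real.exp (-t ^ 2 / 2) := chernoff_constant_le d hd t ht s b hs hb

/-! ### The smoothed densities -/

lemma smoothed_nonneg (d : ℕ) (P : Measure (EuclideanSpace ℝ (Fin d)))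
    (x : EuclideanSpace ℝ (Fin d)) : 0 ≤ smoothed d P x :=
  integral_nonneg fun _ => gaussDensity_nonneg d _

section Smoothed

variable (d : ℕ) (P : Measure (EuclideanSpace ℝ (Fin d))) [IsProbabilityMeasure P]

lemma integrable_gaussDensity_prod :
    Integrable (fun z : EuclideanSpace ℝ (Fin d) × EuclideanSpace ℝ (Fin d) =>
      gaussDensity d (z.1 - z.2)) (volume.prod P) := by
  have hc : Continuous (fun z : EuclideanSpace ℝ (Fin d) × EuclideanSpace ℝ (Fin d) =>
      gaussDensity d (z.1 - z.2)) :=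
    (continuous_gaussDensity d).comp (continuous_fst.sub continuous_snd)
  rw [integrable_prod_iff' hc.aestronglyMeasurable]
  refine ⟨Filter.Eventually.of_forall fun μ =>
    (integrable_gaussDensity d).comp_sub_right μ, ?_⟩
  -- The mass of the shifted density does not depend on the shift.
  have h : ∀ μ : EuclideanSpace ℝ (Fin d),
      ∫ x, ‖gaussDensity d (x - μ)‖ = ∫ x, ‖gaussDensity d x‖ := fun μ =>
    integral_sub_right_eq_self (fun x => ‖gaussDensity d x‖) μ
  simp only [h]
  exact integrable_const _

lemma integrable_smoothed : Integrable (smoothed d P) :=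
  (integrable_gaussDensity_prod d P).integral_prod_left

lemma smoothed_le (x : EuclideanSpace ℝ (Fin d)) :
    smoothed d P x ≤ (2 * π) ^ (-(d : ℝ) / 2) := by
  have h := integral_mono_of_nonneg (μ := P)
    (Filter.Eventually.of_forall fun μ => gaussDensity_nonneg d (x - μ))
    (integrable_const ((2 * π) ^ (-(d : ℝ) / 2)))
    (Filter.Eventually.of_forall fun μ => gaussDensity_le d (x - μ))
  simpa [smoothed] using h

lemma smoothed_tail (hd : 1 ≤ d) (r t : ℝ) (ht : 0 ≤ t)
    (hP : P (Metric.closedBall (0 : EuclideanSpace ℝ (Fin d)) r)ᶜ = 0) :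
    ∫ x in (Metric.closedBall (0 : EuclideanSpace ℝ (Fin d)) (r + Real.sqrt d + t))ᶜ,
      smoothed d P x ≤ Real.exp (-t ^ 2 / 2) := by
  set S := (Metric.closedBall (0 : EuclideanSpace ℝ (Fin d)) (r + Real.sqrt d + t))ᶜ
  have hint : Integrable (fun z : EuclideanSpace ℝ (Fin d) × EuclideanSpace ℝ (Fin d) =>
      gaussDensity d (z.1 - z.2)) ((volume.restrict S).prod P) :=
    (integrable_gaussDensity_prod d P).mono_measure
      (Measure.prod_mono Measure.restrict_le_self le_rfl)
  have hsupp : ∀ᵐ μ ∂P, ‖μ‖ ≤ r := by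
    have h : ∀ᵐ μ ∂P, μ ∈ Metric.closedBall (0 : EuclideanSpace ℝ (Fin d)) r := hP
    filter_upwards [h] with μ hμ
    simpa using hμ
  calc ∫ x in S, smoothed d P x
      = ∫ μ, (∫ x in S, gaussDensity d (x - μ)) ∂P :=
        integral_integral_swap (f := fun x μ => gaussDensity d (x - μ)) hint
    _ ≤ ∫ _μ, Real.exp (-t ^ 2 / 2) ∂P := by
        refine integral_mono_of_nonneg
          (Filter.Eventually.of_forall fun μ =>
            integral_nonneg fun x => gaussDensity_nonneg d _) (integrable_const _) ?_
        filter_upwards [hsupp] with μ hμ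
        exact gaussDensity_tail d hd r t ht μ hμ
    _ = Real.exp (-t ^ 2 / 2) := by simp

end Smoothed

/-! ### Cauchy–Schwarz on a ball -/

lemma setIntegral_abs_le_sqrt_mul_sqrt {α : Type*} [MeasurableSpace α] {ν : Measure α}
    {h : α → ℝ} {B : Set α} (hB : ν B ≠ ⊤) (hh : MemLp h 2 ν) :
    ∫ x in B, |h x| ∂ν ≤ Real.sqrt (ν.real B) * Real.sqrt (∫ x, h x ^ 2 ∂ν) := by
  have : IsFiniteMeasure (ν.restrict B) := ⟨by simpa using hB.lt_top⟩
  have hsq : Integrable (fun x => h x ^ 2) ν := hh.integrable_sq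
  have key := integral_mul_le_Lp_mul_Lq_of_nonneg (μ := ν.restrict B) (p := 2) (q := 2)
    Real.HolderConjugate.two_two (f := fun _ => (1 : ℝ)) (g := fun x => |h x|)
    (Filter.Eventually.of_forall fun _ => zero_le_one)
    (Filter.Eventually.of_forall fun _ => abs_nonneg _)
    (memLp_const 1) (by rw [ENNReal.ofReal_ofNat]; exact (hh.restrict B).abs)
  simp only [one_mul, Real.rpow_two, sq_abs, one_pow, integral_const, smul_eq_mul, mul_one,
    ← Real.sqrt_eq_rpow, measureReal_restrict_apply_univ] at key
  refine key.trans (mul_le_mul_of_nonneg_left (Real.sqrt_le_sqrt ?_) (Real.sqrt_nonneg _))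
  exact setIntegral_le_integral hsq (Filter.Eventually.of_forall fun x => sq_nonneg (h x))

lemma volume_real_closedBall (d : ℕ) (hd : 1 ≤ d) (r : ℝ) (hr : 0 ≤ r) :
    volume.real (Metric.closedBall (0 : EuclideanSpace ℝ (Fin d)) r)
      = π ^ ((d : ℝ) / 2) * r ^ d / Real.Gamma ((d : ℝ) / 2 + 1) := by
  have : Nonempty (Fin d) := ⟨⟨0, hd⟩⟩
  have hΓ : 0 < Real.Gamma ((d : ℝ) / 2 + 1) := Real.Gamma_pos_of_pos (by positivity)
  have hπ : Real.sqrt π ^ d = π ^ ((d : ℝ) / 2) := by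
    rw [Real.sqrt_eq_rpow, ← Real.rpow_natCast, ← Real.rpow_mul Real.pi_nonneg]
    congr 1
    ring
  rw [measureReal_def, EuclideanSpace.volume_closedBall, Fintype.card_fin, ENNReal.toReal_mul,
    ENNReal.toReal_pow, ENNReal.toReal_ofReal hr, ENNReal.toReal_ofReal (by positivity), hπ]
  ring

/-- Lemma "l1-to-l2": the TV distance between two Gaussian-smoothed mixing
measures supported in a ball of radius `2R` is bounded by `ε` plus
`√Vol_d(R')/2` times the `ℓ₂` distance of the densities, where
`R' = 2R + √d + √(2 ln(1/ε))`. -/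
theorem tv_to_l2_bound
    (d : ℕ) (hd : 1 ≤ d) (R : ℝ) (hR : 0 < R)
    (P Q : Measure (EuclideanSpace ℝ (Fin d)))
    [IsProbabilityMeasure P] [IsProbabilityMeasure Q]
    (hP : P (Metric.closedBall (0 : EuclideanSpace ℝ (Fin d)) (2 * R))ᶜ = 0)
    (hQ : Q (Metric.closedBall (0 : EuclideanSpace ℝ (Fin d)) (2 * R))ᶜ = 0)
    (ε : ℝ) (hε0 : 0 < ε) (hε1 : ε < 1)
    (R' : ℝ) (hR' : R' = 2 * R + Real.sqrt d + Real.sqrt (2 * Real.log (1 / ε))) :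
    (1 / 2) * ∫ x : EuclideanSpace ℝ (Fin d),
        |(∫ μ, (2 * π) ^ (-(d : ℝ) / 2) * Real.exp (-‖x - μ‖ ^ 2 / 2) ∂P)
          - ∫ μ, (2 * π) ^ (-(d : ℝ) / 2) * Real.exp (-‖x - μ‖ ^ 2 / 2) ∂Q|
    ≤ ε + (1 / 2) * Real.sqrt (π ^ ((d : ℝ) / 2) * R' ^ d / Real.Gamma ((d : ℝ) / 2 + 1))
        * Real.sqrt (∫ x : EuclideanSpace ℝ (Fin d),
            ((∫ μ, (2 * π) ^ (-(d : ℝ) / 2) * Real.exp (-‖x - μ‖ ^ 2 / 2) ∂P)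
              - ∫ μ, (2 * π) ^ (-(d : ℝ) / 2) * Real.exp (-‖x - μ‖ ^ 2 / 2) ∂Q) ^ 2) := by
  have hlog : 0 ≤ 2 * Real.log (1 / ε) := by
    have := Real.log_nonneg (one_le_one_div hε0 hε1.le)
    positivity
  obtain ⟨t, ht⟩ : ∃ t, t = Real.sqrt (2 * Real.log (1 / ε)) := ⟨_, rfl⟩
  have ht0 : 0 ≤ t := ht ▸ Real.sqrt_nonneg _
  have hexp : Real.exp (-t ^ 2 / 2) = ε := by
    rw [ht, Real.sq_sqrt hlog, one_div, Real.log_inv]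
    ring_nf
    exact Real.exp_log hε0
  rw [← ht] at hR'
  have hR'0 : 0 ≤ R' := by rw [hR']; positivity
  have hp := integrable_smoothed d P
  have hq := integrable_smoothed d Q
  have hh : Integrable (fun x => smoothed d P x - smoothed d Q x) := hp.sub hq
  have hbound : ∀ x, ‖smoothed d P x - smoothed d Q x‖ ≤ (2 * π) ^ (-(d : ℝ) / 2) := fun x => by
    rw [Real.norm_eq_abs, abs_le]
    have h1 := smoothed_nonneg d P x
    have h2 := smoothed_nonneg d Q x
    have h3 := smoothed_le d P x
    have h4 := smoothed_le d Q x
    constructor <;> linarith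
  -- A bounded integrable function is square integrable.
  have hL2 : MemLp (fun x => smoothed d P x - smoothed d Q x) 2 := by
    rw [memLp_two_iff_integrable_sq hh.aestronglyMeasurable]
    simp only [sq]
    exact hh.bdd_mul hh.aestronglyMeasurable (Filter.Eventually.of_forall hbound)
  set B := Metric.closedBall (0 : EuclideanSpace ℝ (Fin d)) R' with hB
  have hin := setIntegral_abs_le_sqrt_mul_sqrt (B := B)
    (measure_closedBall_lt_top (x := (0 : EuclideanSpace ℝ (Fin d))) (r := R')).ne hL2
  rw [hB, volume_real_closedBall d hd R' hR'0, ← hB] at hin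
  have hout : ∫ x in Bᶜ, |smoothed d P x - smoothed d Q x| ≤ 2 * ε := by
    have hPt := smoothed_tail d P hd (2 * R) t ht0 hP
    have hQt := smoothed_tail d Q hd (2 * R) t ht0 hQ
    rw [← hR', hexp, ← hB] at hPt hQt
    calc ∫ x in Bᶜ, |smoothed d P x - smoothed d Q x|
        ≤ ∫ x in Bᶜ, (smoothed d P x + smoothed d Q x) := by
          refine integral_mono hh.abs.integrableOn (hp.add hq).integrableOn fun x => ?_
          have h1 := smoothed_nonneg d P x
          have h2 := smoothed_nonneg d Q x
          simp only [abs_le]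
          constructor <;> linarith
      _ = (∫ x in Bᶜ, smoothed d P x) + ∫ x in Bᶜ, smoothed d Q x :=
          integral_add hp.integrableOn hq.integrableOn
      _ ≤ 2 * ε := by linarith
  have hsplit := integral_add_compl (s := B) Metric.isClosed_closedBall.measurableSet hh.abs
  change (1 / 2) * ∫ x, |smoothed d P x - smoothed d Q x| ≤
    ε + (1 / 2) * Real.sqrt (π ^ ((d : ℝ) / 2) * R' ^ d / Real.Gamma ((d : ℝ) / 2 + 1))
      * Real.sqrt (∫ x, (smoothed d P x - smoothed d Q x) ^ 2)
  rw [← hsplit, mul_assoc]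
  linarith
end

section
/- Let d ≥ 1 and t ≥ 1 be integers and R > 0 with t/(4R) ≥ √(5d). Let P and Q be probability measures on ℝ^d supported in the closed Euclidean ball of radius 2R centered at the origin such that for every integer t' with 1 ≤ t' ≤ t and every ξ ∈ ℝ^d, ∫ ⟨ξ, μ⟩^{t'} dP(μ) = ∫ ⟨ξ, μ⟩^{t'} dQ(μ). Define p̃(x) = ∫ (2π)^{−d/2} e^{−‖x−μ‖₂²/2} dP(μ) and q̃(x) = ∫ (2π)^{−d/2} e^{−‖x−μ‖₂²/2} dQ(μ). Then ∫_{ℝ^d} (p̃(x) − q̃(x))² dx ≤ 4 exp(−t²/(80R²)) + 2 (t/(4R))^d · (2R)^{2t} / t!. -/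
/-!
Expanding the square and integrating in `x`, the squared `L²` distance is the energy
`(4π)^(-d/2) ∫∫ exp (-‖μ - ν‖² / 4) d(P - Q)(μ) d(P - Q)(ν)` (`l2_sq_eq_crossDiff`).

The moment hypothesis makes `∫∫ ⟪ξ, μ - ν⟫ ^ (2j) d(P - Q) d(P - Q)` vanish for `j < t`, since every
binomial term has degree at most `t` in `μ` or in `ν`. Averaging over a standard
Gaussian `ξ` yields the same for `‖μ - ν‖ ^ (2j)` (`crossDiff_norm_pow_eq_zero`). Hence the first
`t` Taylor terms of `exp (-s)` at `s = ‖μ - ν‖² / 4` contribute nothing. As `s ≤ (2R)²` on the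
supports, the remainder is at most `(2R)^(2t) / t!`, and `(P - Q) ⊗ (P - Q)` has total variation at
most `4`. With `(4π)^(-d/2) ≤ 1/2` this bounds the energy by `2 (2R)^(2t) / t!`, which is at most the
second summand of the claim because `t / (4R) ≥ √(5d) ≥ 1`.
-/

open MeasureTheory Real
open scoped RealInnerProductSpace

namespace MatchingMoments

open ProbabilityTheory

/-! ### The bilinear form of `P - Q` -/

section Bilinear

variable {E : Type*} [MeasurableSpace E]

/-- The bilinear form `∫∫ f d(P - Q) d(P - Q)`, written as a combination of four integrals against
product measures so that no signed measure is needed. -/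
noncomputable def crossDiff (P Q : Measure E) (f : E × E → ℝ) : ℝ :=
  ∫ z, f z ∂(P.prod P) - ∫ z, f z ∂(P.prod Q) - ∫ z, f z ∂(Q.prod P) + ∫ z, f z ∂(Q.prod Q)

lemma crossDiff_mul (P Q : Measure E) [SFinite P] [SFinite Q] (f g : E → ℝ) :
    crossDiff P Q (fun z => f z.1 * g z.2)
      = (∫ x, f x ∂P - ∫ x, f x ∂Q) * (∫ x, g x ∂P - ∫ x, g x ∂Q) := by
  simp only [crossDiff, integral_prod_mul]
  ring

lemma crossDiff_const_mul (P Q : Measure E) (c : ℝ) (f : E × E → ℝ) :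
    crossDiff P Q (fun z => c * f z) = c * crossDiff P Q f := by
  simp only [crossDiff, integral_const_mul]
  ring

/-- Integrability against each of the four products of `P` and `Q`. -/
def CrossIntegrable (P Q : Measure E) (f : E × E → ℝ) : Prop :=
  Integrable f (P.prod P) ∧ Integrable f (P.prod Q) ∧ Integrable f (Q.prod P) ∧
    Integrable f (Q.prod Q)

lemma crossDiff_sub {P Q : Measure E} {f g : E × E → ℝ} (hf : CrossIntegrable P Q f)
    (hg : CrossIntegrable P Q g) :
    crossDiff P Q (fun z => f z - g z) = crossDiff P Q f - crossDiff P Q g := by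
  obtain ⟨f1, f2, f3, f4⟩ := hf
  obtain ⟨g1, g2, g3, g4⟩ := hg
  simp only [crossDiff, integral_sub f1 g1, integral_sub f2 g2, integral_sub f3 g3,
    integral_sub f4 g4]
  ring

lemma crossDiff_sum {P Q : Measure E} {ι : Type*} (s : Finset ι) {f : ι → E × E → ℝ}
    (hf : ∀ i ∈ s, CrossIntegrable P Q (f i)) :
    crossDiff P Q (fun z => ∑ i ∈ s, f i z) = ∑ i ∈ s, crossDiff P Q (f i) := by
  simp only [crossDiff]
  rw [integral_finsetSum s fun i hi => (hf i hi).1, integral_finsetSum s fun i hi => (hf i hi).2.1,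
    integral_finsetSum s fun i hi => (hf i hi).2.2.1,
    integral_finsetSum s fun i hi => (hf i hi).2.2.2]
  simp only [Finset.sum_add_distrib, Finset.sum_sub_distrib]

/-- Fubini for the form `crossDiff`. -/
lemma integral_crossDiff {X : Type*} [MeasurableSpace X] (P Q : Measure E) [SFinite P] [SFinite Q]
    (ν : Measure X) [SFinite ν] (f : E × E → X → ℝ)
    (hPP : Integrable (Function.uncurry f) ((P.prod P).prod ν))
    (hPQ : Integrable (Function.uncurry f) ((P.prod Q).prod ν))
    (hQP : Integrable (Function.uncurry f) ((Q.prod P).prod ν))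
    (hQQ : Integrable (Function.uncurry f) ((Q.prod Q).prod ν)) :
    ∫ x, crossDiff P Q (fun z => f z x) ∂ν = crossDiff P Q (fun z => ∫ x, f z x ∂ν) := by
  have i1 : Integrable (fun x => ∫ z, f z x ∂(P.prod P)) ν := hPP.integral_prod_right
  have i2 : Integrable (fun x => ∫ z, f z x ∂(P.prod Q)) ν := hPQ.integral_prod_right
  have i3 : Integrable (fun x => ∫ z, f z x ∂(Q.prod P)) ν := hQP.integral_prod_right
  have i4 : Integrable (fun x => ∫ z, f z x ∂(Q.prod Q)) ν := hQQ.integral_prod_right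
  simp only [crossDiff]
  have i12 : Integrable (fun x => ∫ z, f z x ∂(P.prod P) - ∫ z, f z x ∂(P.prod Q)) ν := i1.sub i2
  rw [integral_add (f := fun x => ∫ z, f z x ∂(P.prod P) - ∫ z, f z x ∂(P.prod Q)
      - ∫ z, f z x ∂(Q.prod P)) (i12.sub i3) i4, integral_sub i12 i3, integral_sub i1 i2,
    integral_integral_swap hPP, integral_integral_swap hPQ, integral_integral_swap hQP,
    integral_integral_swap hQQ]

lemma ae_prod_and {A B : Measure E} [SFinite A] [SFinite B] {p : E → Prop}
    (hA : ∀ᵐ x ∂A, p x) (hB : ∀ᵐ x ∂B, p x) : ∀ᵐ z ∂(A.prod B), p z.1 ∧ p z.2 :=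
  (Measure.quasiMeasurePreserving_fst.ae hA).and (Measure.quasiMeasurePreserving_snd.ae hB)

lemma abs_crossDiff_le {P Q : Measure E} [IsProbabilityMeasure P] [IsProbabilityMeasure Q]
    {p : E → Prop} (hP : ∀ᵐ x ∂P, p x) (hQ : ∀ᵐ x ∂Q, p x) {f : E × E → ℝ} {C : ℝ}
    (hf : ∀ z, p z.1 → p z.2 → |f z| ≤ C) : |crossDiff P Q f| ≤ 4 * C := by
  have key : ∀ A B : Measure E, [IsProbabilityMeasure A] → [IsProbabilityMeasure B] →
      (∀ᵐ x ∂A, p x) → (∀ᵐ x ∂B, p x) → |∫ z, f z ∂(A.prod B)| ≤ C := by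
    intro A B _ _ hA hB
    have h := norm_integral_le_of_norm_le_const (μ := A.prod B) (f := f) (C := C)
      ((ae_prod_and hA hB).mono fun z hz => hf z hz.1 hz.2)
    simpa using h
  have h1 := abs_le.1 (key P P hP hP)
  have h2 := abs_le.1 (key P Q hP hQ)
  have h3 := abs_le.1 (key Q P hQ hP)
  have h4 := abs_le.1 (key Q Q hQ hQ)
  rw [abs_le, crossDiff]
  constructor <;> linarith

end Bilinear

/-! ### Matching moments -/

section Euclidean

variable {E : Type*} [NormedAddCommGroup E] [InnerProductSpace ℝ E] [FiniteDimensional ℝ E]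
  [MeasurableSpace E] [BorelSpace E]

lemma integrable_of_continuous {A B : Measure E} [IsFiniteMeasure A] [IsFiniteMeasure B] {r : ℝ}
    (hA : ∀ᵐ x ∂A, ‖x‖ ≤ r) (hB : ∀ᵐ x ∂B, ‖x‖ ≤ r) {f : E × E → ℝ} (hf : Continuous f) :
    Integrable f (A.prod B) := by
  obtain ⟨C, hC⟩ := ((isCompact_closedBall (0 : E) r).prod
    (isCompact_closedBall (0 : E) r)).exists_bound_of_continuousOn hf.continuousOn
  refine Integrable.of_bound hf.aestronglyMeasurable C ?_
  filter_upwards [ae_prod_and hA hB] with z hz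
  exact hC z ⟨by simpa using hz.1, by simpa using hz.2⟩

lemma crossIntegrable_of_continuous {P Q : Measure E} [IsFiniteMeasure P] [IsFiniteMeasure Q]
    {r : ℝ} (hP : ∀ᵐ x ∂P, ‖x‖ ≤ r) (hQ : ∀ᵐ x ∂Q, ‖x‖ ≤ r) {f : E × E → ℝ} (hf : Continuous f) :
    CrossIntegrable P Q f :=
  ⟨integrable_of_continuous hP hP hf, integrable_of_continuous hP hQ hf,
    integrable_of_continuous hQ hP hf, integrable_of_continuous hQ hQ hf⟩

/-- Under matching moments up to order `t`, the form kills `⟪ξ, μ - ν⟫ ^ n` for `n < 2 * t`: in each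
binomial term one of the two exponents is at most `t`. -/
lemma crossDiff_inner_pow_eq_zero {P Q : Measure E} [IsProbabilityMeasure P]
    [IsProbabilityMeasure Q] {r : ℝ} (hP : ∀ᵐ x ∂P, ‖x‖ ≤ r) (hQ : ∀ᵐ x ∂Q, ‖x‖ ≤ r) {t n : ℕ}
    (hn : n < 2 * t) (ξ : E)
    (hmom : ∀ k ≤ t, (∫ μ, (⟪ξ, μ⟫ : ℝ) ^ k ∂P) = ∫ μ, (⟪ξ, μ⟫ : ℝ) ^ k ∂Q) :
    crossDiff P Q (fun z => (⟪ξ, z.1 - z.2⟫ : ℝ) ^ n) = 0 := by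
  have hexp : (fun z : E × E => (⟪ξ, z.1 - z.2⟫ : ℝ) ^ n)
      = fun z => ∑ k ∈ Finset.range (n + 1),
        (((-1) ^ (n - k) * (n.choose k : ℝ)) *
          ((⟪ξ, z.1⟫ : ℝ) ^ k * (⟪ξ, z.2⟫ : ℝ) ^ (n - k))) := by
    funext z
    rw [inner_sub_right, sub_eq_add_neg, add_pow]
    refine Finset.sum_congr rfl fun k _ => ?_
    rw [neg_pow]
    ring
  rw [hexp, crossDiff_sum _ fun k _ => crossIntegrable_of_continuous hP hQ (by fun_prop)]
  refine Finset.sum_eq_zero fun k hk => ?_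
  rw [crossDiff_const_mul,
    crossDiff_mul P Q (fun x => (⟪ξ, x⟫ : ℝ) ^ k) (fun x => (⟪ξ, x⟫ : ℝ) ^ (n - k))]
  rcases le_or_gt k t with h | h
  · rw [hmom k h]
    ring
  · rw [hmom (n - k) (by omega)]
    ring

lemma integral_inner_pow_stdGaussian (w : E) (n : ℕ) :
    ∫ ξ, (⟪ξ, w⟫ : ℝ) ^ n ∂(stdGaussian E) = (∫ x, x ^ n ∂(gaussianReal 0 1)) * ‖w‖ ^ n := by
  have h1 : (stdGaussian E).map (innerSL ℝ w) = (gaussianReal 0 1).map (‖w‖ * ·) := by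
    rw [IsGaussian.map_eq_gaussianReal, integral_strongDual_stdGaussian,
      variance_dual_stdGaussian, gaussianReal_map_const_mul]
    congr 1
    · simp
    · ext
      simp
  calc ∫ ξ, (⟪ξ, w⟫ : ℝ) ^ n ∂(stdGaussian E)
      = ∫ ξ, (innerSL ℝ w ξ) ^ n ∂(stdGaussian E) := by
        simp only [innerSL_apply_apply, real_inner_comm]
    _ = ∫ x, x ^ n ∂((stdGaussian E).map (innerSL ℝ w)) := by
        rw [integral_map (by fun_prop) (by fun_prop)]
    _ = _ := by
        rw [h1, integral_map (by fun_prop) (by fun_prop), ← integral_mul_const]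
        refine integral_congr_ae (.of_forall fun x => ?_)
        simp only [mul_pow]
        ring

lemma gaussian_even_moment_ne_zero (j : ℕ) : ∫ x, x ^ (2 * j) ∂(gaussianReal 0 1) ≠ 0 := by
  have := nullSingletonClass_gaussianReal (μ := 0) (v := 1) one_ne_zero
  have hint : Integrable (fun x : ℝ => x ^ (2 * j)) (gaussianReal 0 1) := by
    have := (memLp_id_gaussianReal (μ := 0) (v := 1) (2 * j : ℕ)).integrable_norm_pow'
    refine this.congr (.of_forall fun x => ?_)
    simp [pow_mul]
  refine ne_of_gt ((integral_pos_iff_support_of_nonneg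
    (fun x => (even_two_mul j).pow_nonneg x) hint).2 ?_)
  refine lt_of_lt_of_le ?_ (measure_mono (s := {0}ᶜ) fun x hx => pow_ne_zero _ hx)
  rw [prob_compl_eq_one_sub (measurableSet_singleton 0)]
  simp

/-- Averaging `crossDiff_inner_pow_eq_zero` over a standard Gaussian `ξ` turns the powers of
`⟪ξ, μ - ν⟫` into powers of `‖μ - ν‖`; this replaces polarization of the moment hypothesis. -/
lemma crossDiff_norm_pow_eq_zero {P Q : Measure E} [IsProbabilityMeasure P]
    [IsProbabilityMeasure Q] {r : ℝ} (hP : ∀ᵐ x ∂P, ‖x‖ ≤ r) (hQ : ∀ᵐ x ∂Q, ‖x‖ ≤ r) {t j : ℕ}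
    (hj : j < t)
    (hmom : ∀ k ≤ t, ∀ ξ : E, (∫ μ, (⟪ξ, μ⟫ : ℝ) ^ k ∂P) = ∫ μ, (⟪ξ, μ⟫ : ℝ) ^ k ∂Q) :
    crossDiff P Q (fun z => ‖z.1 - z.2‖ ^ (2 * j)) = 0 := by
  have hint : ∀ A B : Measure E, [IsProbabilityMeasure A] → [IsProbabilityMeasure B] →
      (∀ᵐ x ∂A, ‖x‖ ≤ r) → (∀ᵐ x ∂B, ‖x‖ ≤ r) →
      Integrable (Function.uncurry fun (z : E × E) (ξ : E) => (⟪ξ, z.1 - z.2⟫ : ℝ) ^ (2 * j))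
        ((A.prod B).prod (stdGaussian E)) := by
    intro A B _ _ hA hB
    have hγ : Integrable (fun ξ : E => ‖ξ‖ ^ (2 * j)) (stdGaussian E) :=
      (IsGaussian.memLp_id (stdGaussian E) (2 * j : ℕ)
        (ENNReal.natCast_ne_top _)).integrable_norm_pow'
    have hdom : Integrable (fun y : (E × E) × E => ‖y.2‖ ^ (2 * j) * (r + r) ^ (2 * j))
        ((A.prod B).prod (stdGaussian E)) :=
      (hγ.mul_const _).comp_snd (A.prod B)
    refine hdom.mono' (Continuous.aestronglyMeasurable (by unfold Function.uncurry; fun_prop)) ?_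
    have hae : ∀ᵐ y ∂((A.prod B).prod (stdGaussian E)), ‖y.1.1‖ ≤ r ∧ ‖y.1.2‖ ≤ r :=
      Measure.quasiMeasurePreserving_fst.ae (ae_prod_and hA hB)
    filter_upwards [hae] with y hy
    simp only [Function.uncurry, norm_pow, ← mul_pow]
    gcongr
    refine (norm_inner_le_norm _ _).trans ?_
    gcongr
    exact (norm_sub_le _ _).trans (add_le_add hy.1 hy.2)
  have h := integral_crossDiff P Q (stdGaussian E)
    (fun (z : E × E) (ξ : E) => (⟪ξ, z.1 - z.2⟫ : ℝ) ^ (2 * j))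
    (hint P P hP hP) (hint P Q hP hQ) (hint Q P hQ hP) (hint Q Q hQ hQ)
  simp only [integral_inner_pow_stdGaussian, crossDiff_const_mul] at h
  rw [integral_eq_zero_of_ae (.of_forall fun ξ =>
    crossDiff_inner_pow_eq_zero hP hQ (by omega) ξ fun k hk => hmom k hk ξ)] at h
  exact (mul_eq_zero.1 h.symm).resolve_left (gaussian_even_moment_ne_zero j)

end Euclidean

/-! ### Taylor remainder of `exp (-s)` -/

/-- The Taylor remainders of `exp (-s)` at `0` alternate in sign for `s ≥ 0`. -/
lemma exp_neg_remainder_sign (n : ℕ) : ∀ s : ℝ, 0 ≤ s →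
    0 ≤ (-1) ^ n * (Real.exp (-s) - ∑ j ∈ Finset.range n, (-s) ^ j / (j.factorial : ℝ)) := by
  induction n with
  | zero => intro s _; simpa using (Real.exp_pos (-s)).le
  | succ n ih =>
    intro s hs
    set F : ℝ → ℝ := fun s => (-1) ^ (n + 1) *
      (Real.exp (-s) - ∑ j ∈ Finset.range (n + 1), (-s) ^ j / (j.factorial : ℝ)) with hF
    have hder : ∀ x, HasDerivAt F ((-1) ^ n *
        (Real.exp (-x) - ∑ j ∈ Finset.range n, (-x) ^ j / (j.factorial : ℝ))) x := by
      intro x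
      have hsum : HasDerivAt
          (fun s : ℝ => ∑ j ∈ Finset.range (n + 1), (-s) ^ j / (j.factorial : ℝ))
          (∑ j ∈ Finset.range (n + 1), ((j : ℝ) * (-x) ^ (j - 1) * -1) / (j.factorial : ℝ)) x :=
        HasDerivAt.fun_sum fun j _ => (((hasDerivAt_id x).neg).pow j).div_const _
      have hval : ∑ j ∈ Finset.range (n + 1), ((j : ℝ) * (-x) ^ (j - 1) * -1) / (j.factorial : ℝ)
          = -∑ j ∈ Finset.range n, (-x) ^ j / (j.factorial : ℝ) := by
        rw [Finset.sum_range_succ', ← Finset.sum_neg_distrib]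
        simp only [Nat.cast_zero, zero_mul, zero_div, add_zero]
        refine Finset.sum_congr rfl fun j _ => ?_
        have : (j.factorial : ℝ) ≠ 0 := by positivity
        rw [Nat.factorial_succ, Nat.add_sub_cancel]
        push_cast
        field_simp
      rw [hval] at hsum
      have hexp : HasDerivAt (fun s : ℝ => Real.exp (-s)) (Real.exp (-x) * -1) x :=
        ((hasDerivAt_id x).neg).exp
      refine ((hexp.sub hsum).const_mul ((-1) ^ (n + 1))).congr_deriv ?_
      ring
    have hmono : MonotoneOn F (Set.Ici 0) := by
      refine monotoneOn_of_deriv_nonneg (convex_Ici 0)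
        (fun x _ => (hder x).continuousAt.continuousWithinAt)
        (fun x _ => (hder x).differentiableAt.differentiableWithinAt) fun x hx => ?_
      rw [(hder x).deriv]
      rw [interior_Ici] at hx
      exact ih x (le_of_lt hx)
    have h0 : F 0 = 0 := by
      simp [hF, Finset.sum_range_succ']
    have := hmono Set.self_mem_Ici hs hs
    rwa [h0] at this

lemma abs_exp_neg_sub_sum_le (n : ℕ) {s : ℝ} (hs : 0 ≤ s) :
    |Real.exp (-s) - ∑ j ∈ Finset.range n, (-s) ^ j / (j.factorial : ℝ)|
      ≤ s ^ n / (n.factorial : ℝ) := by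
  have h1 := exp_neg_remainder_sign n s hs
  have h2 := exp_neg_remainder_sign (n + 1) s hs
  rw [Finset.sum_range_succ, ← sub_sub, neg_pow s n, pow_succ] at h2
  rcases neg_one_pow_eq_or ℝ n with h | h <;> rw [h] at h1 h2 <;> rw [abs_le] <;>
    have := div_nonneg (pow_nonneg hs n) (Nat.cast_nonneg (α := ℝ) n.factorial) <;>
    constructor <;> simp only [one_mul, neg_mul, neg_div] at h1 h2 <;> linarith

/-! ### The Gaussian kernel -/

section Kernel

variable {d : ℕ}

local notation "Eu" => EuclideanSpace ℝ (Fin d)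

lemma gaussian_mul_eq (x a b : Eu) :
    Real.exp (-‖x - a‖ ^ 2 / 2) * Real.exp (-‖x - b‖ ^ 2 / 2)
      = Real.exp (-(‖a - b‖ ^ 2 / 4)) * Real.exp (-1 * ‖x - (1 / 2 : ℝ) • (a + b)‖ ^ 2) := by
  rw [← Real.exp_add, ← Real.exp_add]
  congr 1
  have h := parallelogram_law_with_norm ℝ (x - a) (x - b)
  have e1 : (x - a) + (x - b) = (2 : ℝ) • (x - (1 / 2 : ℝ) • (a + b)) := by module
  have e2 : (x - a) - (x - b) = -(a - b) := by abel
  rw [e1, e2, norm_neg, norm_smul, Real.norm_ofNat] at h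
  linarith

lemma integrable_gaussian : Integrable (fun x : Eu => Real.exp (-1 * ‖x‖ ^ 2)) := by
  by_contra h
  have h1 := GaussianFourier.integral_rexp_neg_mul_sq_norm (V := Eu) (b := 1) one_pos
  rw [integral_undef h] at h1
  have : (0 : ℝ) < (π / 1) ^ (Module.finrank ℝ Eu / 2 : ℝ) := by positivity
  linarith

lemma integrable_gaussian_mul (a b : Eu) :
    Integrable (fun x : Eu => Real.exp (-‖x - a‖ ^ 2 / 2) * Real.exp (-‖x - b‖ ^ 2 / 2)) := by
  simp only [gaussian_mul_eq]
  exact (integrable_gaussian.comp_sub_right _).const_mul _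

lemma integral_gaussian_mul (a b : Eu) :
    ∫ x : Eu, Real.exp (-‖x - a‖ ^ 2 / 2) * Real.exp (-‖x - b‖ ^ 2 / 2)
      = π ^ ((d : ℝ) / 2) * Real.exp (-(‖a - b‖ ^ 2 / 4)) := by
  simp only [gaussian_mul_eq, integral_const_mul]
  rw [integral_sub_right_eq_self (fun x : Eu => Real.exp (-1 * ‖x‖ ^ 2)),
    GaussianFourier.integral_rexp_neg_mul_sq_norm one_pos]
  simp [mul_comm]

lemma integrable_uncurry_gaussian_mul (A B : Measure Eu) [IsProbabilityMeasure A]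
    [IsProbabilityMeasure B] :
    Integrable (Function.uncurry fun (z : Eu × Eu) (x : Eu) =>
      Real.exp (-‖x - z.1‖ ^ 2 / 2) * Real.exp (-‖x - z.2‖ ^ 2 / 2))
        ((A.prod B).prod volume) := by
  rw [integrable_prod_iff (Continuous.aestronglyMeasurable (by unfold Function.uncurry; fun_prop))]
  refine ⟨.of_forall fun z => integrable_gaussian_mul z.1 z.2, ?_⟩
  have h : ∀ z : Eu × Eu, ∫ x : Eu, ‖Function.uncurry (fun (z : Eu × Eu) (x : Eu) =>
      Real.exp (-‖x - z.1‖ ^ 2 / 2) * Real.exp (-‖x - z.2‖ ^ 2 / 2)) (z, x)‖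
        = π ^ ((d : ℝ) / 2) * Real.exp (-(‖z.1 - z.2‖ ^ 2 / 4)) := by
    intro z
    rw [← integral_gaussian_mul]
    refine integral_congr_ae (.of_forall fun x => ?_)
    simp only [Function.uncurry, Real.norm_eq_abs]
    exact abs_of_nonneg (by positivity)
  simp only [h]
  refine Integrable.of_bound (Continuous.aestronglyMeasurable (by fun_prop))
    (π ^ ((d : ℝ) / 2)) (.of_forall fun z => ?_)
  rw [Real.norm_of_nonneg (by positivity)]
  exact mul_le_of_le_one_right (by positivity) (Real.exp_le_one_iff.2 (by
    have := sq_nonneg ‖z.1 - z.2‖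
    linarith))

/-- The `L²` distance of the smoothed measures as the energy of `P - Q` for a Gaussian kernel. -/
lemma l2_sq_eq_crossDiff (P Q : Measure Eu) [IsProbabilityMeasure P] [IsProbabilityMeasure Q]
    (c : ℝ) :
    (∫ x : Eu, ((∫ μ, c * Real.exp (-‖x - μ‖ ^ 2 / 2) ∂P)
          - ∫ μ, c * Real.exp (-‖x - μ‖ ^ 2 / 2) ∂Q) ^ 2)
      = c ^ 2 * π ^ ((d : ℝ) / 2) *
        crossDiff P Q (fun z => Real.exp (-(‖z.1 - z.2‖ ^ 2 / 4))) := by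
  have h := integral_crossDiff P Q volume (fun (z : Eu × Eu) (x : Eu) =>
      Real.exp (-‖x - z.1‖ ^ 2 / 2) * Real.exp (-‖x - z.2‖ ^ 2 / 2))
    (integrable_uncurry_gaussian_mul P P) (integrable_uncurry_gaussian_mul P Q)
    (integrable_uncurry_gaussian_mul Q P) (integrable_uncurry_gaussian_mul Q Q)
  simp only [integral_gaussian_mul, crossDiff_const_mul] at h
  rw [mul_assoc, ← h, ← integral_const_mul]
  refine integral_congr_ae (.of_forall fun x => ?_)
  simp only [integral_const_mul]
  rw [crossDiff_mul P Q (fun μ => Real.exp (-‖x - μ‖ ^ 2 / 2))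
    (fun μ => Real.exp (-‖x - μ‖ ^ 2 / 2))]
  ring

lemma crossDiff_gaussian_le {P Q : Measure Eu} [IsProbabilityMeasure P] [IsProbabilityMeasure Q]
    {r : ℝ} (hP : ∀ᵐ x ∂P, ‖x‖ ≤ r) (hQ : ∀ᵐ x ∂Q, ‖x‖ ≤ r) {t : ℕ}
    (hmom : ∀ k ≤ t, ∀ ξ : Eu, (∫ μ, (⟪ξ, μ⟫ : ℝ) ^ k ∂P) = ∫ μ, (⟪ξ, μ⟫ : ℝ) ^ k ∂Q) :
    crossDiff P Q (fun z => Real.exp (-(‖z.1 - z.2‖ ^ 2 / 4)))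
      ≤ 4 * (r ^ (2 * t) / (t.factorial : ℝ)) := by
  -- The Taylor polynomial of the kernel, of degree `2 * (t - 1)` in `‖μ - ν‖`, is killed.
  have hpoly : crossDiff P Q (fun z => ∑ j ∈ Finset.range t,
      (-(‖z.1 - z.2‖ ^ 2 / 4)) ^ j / (j.factorial : ℝ)) = 0 := by
    rw [crossDiff_sum _ fun j _ => crossIntegrable_of_continuous hP hQ (by fun_prop)]
    refine Finset.sum_eq_zero fun j hj => ?_
    have : (fun z : Eu × Eu => (-(‖z.1 - z.2‖ ^ 2 / 4)) ^ j / (j.factorial : ℝ))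
        = fun z => ((-1 / 4) ^ j / (j.factorial : ℝ)) * ‖z.1 - z.2‖ ^ (2 * j) := by
      funext z
      rw [pow_mul, show -(‖z.1 - z.2‖ ^ 2 / 4) = (-1 / 4) * ‖z.1 - z.2‖ ^ 2 by ring, mul_pow]
      ring
    rw [this, crossDiff_const_mul,
      crossDiff_norm_pow_eq_zero hP hQ (Finset.mem_range.1 hj) hmom, mul_zero]
  have hsub := crossDiff_sub (P := P) (Q := Q)
    (f := fun z => Real.exp (-(‖z.1 - z.2‖ ^ 2 / 4)))
    (g := fun z => ∑ j ∈ Finset.range t, (-(‖z.1 - z.2‖ ^ 2 / 4)) ^ j / (j.factorial : ℝ))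
    (crossIntegrable_of_continuous hP hQ (by fun_prop))
    (crossIntegrable_of_continuous hP hQ (by fun_prop))
  rw [hpoly, sub_zero] at hsub
  rw [← hsub]
  refine (le_abs_self _).trans (abs_crossDiff_le hP hQ fun z h1 h2 => ?_)
  refine (abs_exp_neg_sub_sum_le t (by positivity)).trans ?_
  rw [pow_mul]
  gcongr
  have h3 : ‖z.1 - z.2‖ ≤ 2 * r := (norm_sub_le _ _).trans (by linarith)
  nlinarith [norm_nonneg (z.1 - z.2)]

end Kernel

/-- The constant `(4π)^(-d/2)` in front of the energy is at most `1/2` once `d ≥ 1`. -/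
lemma gaussian_const_le {d : ℕ} (hd : 1 ≤ d) :
    ((2 * π) ^ (-(d : ℝ) / 2)) ^ 2 * π ^ ((d : ℝ) / 2) ≤ 1 / 2 := by
  have hpi := Real.pi_gt_three
  have h1 : ((2 * π) ^ (-(d : ℝ) / 2)) ^ 2 * π ^ ((d : ℝ) / 2)
      = (4 * π) ^ (-((d : ℝ) / 2)) := by
    rw [← Real.rpow_natCast ((2 * π) ^ (-(d : ℝ) / 2)) 2, ← Real.rpow_mul (by positivity),
      show (-(d : ℝ) / 2 * ((2 : ℕ) : ℝ)) = 2 * (-((d : ℝ) / 2)) by push_cast; ring,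
      Real.rpow_mul (by positivity), Real.rpow_two,
      show (2 * π) ^ 2 = (4 * π) * π by ring, Real.mul_rpow (by positivity) (by positivity),
      mul_assoc, ← Real.rpow_add (by positivity)]
    simp
  rw [h1]
  have hd' : (1 : ℝ) ≤ d := by exact_mod_cast hd
  calc (4 * π) ^ (-((d : ℝ) / 2)) ≤ (4 * π) ^ (-(1 / 2) : ℝ) :=
        Real.rpow_le_rpow_of_exponent_le (by linarith) (by linarith)
    _ ≤ (4 : ℝ) ^ (-(1 / 2) : ℝ) :=
        Real.rpow_le_rpow_of_nonpos (by norm_num) (by linarith) (by norm_num)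
    _ = 1 / 2 := by
        rw [show (4 : ℝ) = 2 ^ (2 : ℝ) by norm_num, ← Real.rpow_mul (by norm_num)]
        norm_num [Real.rpow_neg]

end MatchingMoments

/-- Lemma "l2-upper-bound": `ℓ₂²` distance between Gaussian-smoothed mixing
measures with matching moments up to order `t`. -/
theorem l2_sq_upper_bound_of_matching_moments
    (d t : ℕ) (hd : 1 ≤ d) (ht : 1 ≤ t) (R : ℝ) (hR : 0 < R)
    (hcut : Real.sqrt (5 * d) ≤ (t : ℝ) / (4 * R))
    (P Q : Measure (EuclideanSpace ℝ (Fin d)))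
    [IsProbabilityMeasure P] [IsProbabilityMeasure Q]
    (hP : P (Metric.closedBall (0 : EuclideanSpace ℝ (Fin d)) (2 * R))ᶜ = 0)
    (hQ : Q (Metric.closedBall (0 : EuclideanSpace ℝ (Fin d)) (2 * R))ᶜ = 0)
    (hmom : ∀ t' : ℕ, 1 ≤ t' → t' ≤ t → ∀ ξ : EuclideanSpace ℝ (Fin d),
      (∫ μ, (⟪ξ, μ⟫ : ℝ) ^ t' ∂P) = ∫ μ, (⟪ξ, μ⟫ : ℝ) ^ t' ∂Q) :
    (∫ x : EuclideanSpace ℝ (Fin d),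
        ((∫ μ, (2 * π) ^ (-(d : ℝ) / 2) * Real.exp (-‖x - μ‖ ^ 2 / 2) ∂P)
          - ∫ μ, (2 * π) ^ (-(d : ℝ) / 2) * Real.exp (-‖x - μ‖ ^ 2 / 2) ∂Q) ^ 2)
    ≤ 4 * Real.exp (-(t : ℝ) ^ 2 / (80 * R ^ 2))
      + 2 * ((t : ℝ) / (4 * R)) ^ d * (2 * R) ^ (2 * t) / (Nat.factorial t) := by
  have hP' : ∀ᵐ x ∂P, ‖x‖ ≤ 2 * R := by
    filter_upwards [mem_ae_iff.2 hP] with x hx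
    simpa using hx
  have hQ' : ∀ᵐ x ∂Q, ‖x‖ ≤ 2 * R := by
    filter_upwards [mem_ae_iff.2 hQ] with x hx
    simpa using hx
  have hmom' : ∀ k ≤ t, ∀ ξ : EuclideanSpace ℝ (Fin d),
      (∫ μ, (⟪ξ, μ⟫ : ℝ) ^ k ∂P) = ∫ μ, (⟪ξ, μ⟫ : ℝ) ^ k ∂Q := by
    intro k hk ξ
    rcases Nat.eq_zero_or_pos k with rfl | h
    · simp
    · exact hmom k h hk ξ
  have hT : 1 ≤ ((t : ℝ) / (4 * R)) ^ d := by
    refine one_le_pow₀ (le_trans (Real.one_le_sqrt.2 ?_) hcut)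
    have : (1 : ℝ) ≤ d := by exact_mod_cast hd
    linarith
  rw [MatchingMoments.l2_sq_eq_crossDiff]
  set X : ℝ := (2 * R) ^ (2 * t) / (Nat.factorial t) with hX
  have hX0 : 0 ≤ X := by positivity
  have hexp := Real.exp_pos (-(t : ℝ) ^ 2 / (80 * R ^ 2))
  calc _ ≤ ((2 * π) ^ (-(d : ℝ) / 2)) ^ 2 * π ^ ((d : ℝ) / 2) * (4 * X) :=
        mul_le_mul_of_nonneg_left (MatchingMoments.crossDiff_gaussian_le hP' hQ' hmom')
          (by positivity)
    _ ≤ 1 / 2 * (4 * X) :=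
        mul_le_mul_of_nonneg_right (MatchingMoments.gaussian_const_le hd) (by positivity)
    _ ≤ 2 * ((t : ℝ) / (4 * R)) ^ d * X := by nlinarith
    _ ≤ _ := by
        rw [mul_div_assoc]
        linarith
end

section
/- For all real numbers a > 0 and d > 0, (a/d)^d ≤ e^{a/e}, where e is Euler's number. -/
/-- For positive reals `a, d`, `(a/d)^d ≤ e^{a/e}`. -/
theorem div_rpow_le_exp_div_e (a d : ℝ) (ha : 0 < a) (hd : 0 < d) :
    (a / d) ^ d ≤ Real.exp (a / Real.exp 1) := by
  have he := Real.exp_pos 1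
  -- The tangent-line bound `t + 1 ≤ exp t` at `t = x / e - 1` gives `x ≤ exp (x / e)`, for `x = a / d`.
  have key : a / d ≤ Real.exp (a / d / Real.exp 1) := by
    have h := Real.add_one_le_exp (a / d / Real.exp 1 - 1)
    rw [sub_add_cancel, Real.exp_sub] at h
    exact (div_le_div_iff_of_pos_right he).mp h
  calc (a / d) ^ d ≤ Real.exp (a / d / Real.exp 1) ^ d :=
        Real.rpow_le_rpow (div_pos ha hd).le key hd.le
    _ = Real.exp (a / Real.exp 1) := by
        rw [← Real.exp_mul]
        congr 1
        field_simp
end
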